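/- Let n ≥ 2 and let A, B ⊆ ℝⁿ be Borel sets with dimH A > n−1, dimH B ≤ n−1 and dimH A + dimH B > 2(n−1). Then for every ε > 0, the set of unit vectors e ∈ S^{n−1} for which dimH(P_e(A) ∩ P_e(B)) > dimH B − ε has positive (n−1)-dimensional Hausdorff measure in S^{n−1}. -/

import Mathlib

open MeasureTheory Metric Set
open scoped ENNReal RealInnerProductSpace

/-! ### Net content on a tree of sequences -/

namespace TreeContent

open PiNat Filter Topology

variable {σ : Type*}

/-- Sequences having an initial segment in `W`; as with `PiNat.res`, words are read backwards. -/
def cylinders (W : Set (List σ)) : Set (ℕ → σ) := {x | ∃ n, res x n ∈ W}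

/-- Sequences with initial segment `w`. -/
def cyl (w : List σ) : Set (ℕ → σ) := {x | res x w.length = w}

/-- The words of `S` without a proper initial segment in `S`. -/
def minimal (S : Set (List σ)) : Set (List σ) := {w ∈ S | ∀ u ∈ S, u <:+ w → u = w}

/-- The total weight of a set of words, where a word of length `k` has weight `θ ^ k`. -/
noncomputable def cost (θ : ℝ≥0∞) (W : Set (List σ)) : ℝ≥0∞ :=
  ∑' w, W.indicator (fun w => θ ^ w.length) w

/-- The least cost of a cover by cylinders. -/
noncomputable def content (θ : ℝ≥0∞) (E : Set (ℕ → σ)) : ℝ≥0∞ :=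
  ⨅ (W : Set (List σ)) (_ : E ⊆ cylinders W), cost θ W

variable {θ : ℝ≥0∞} {E F : Set (ℕ → σ)} {S T W : Set (List σ)}

theorem cylinders_singleton (w : List σ) : cylinders {w} = cyl w := by
  ext x
  constructor
  · rintro ⟨n, hn⟩
    have hn : res x n = w := hn
    have : w.length = n := by rw [← hn, res_length]
    simp [cyl, this, hn]
  · intro h
    exact ⟨w.length, h⟩

theorem cyl_nil : cyl ([] : List σ) = univ := by
  ext x; simp [cyl]

theorem eq_res_of_suffix {x : ℕ → σ} {n : ℕ} {u : List σ} (h : u <:+ res x n) :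
    u = res x u.length := by
  induction n with
  | zero => simp_all
  | succ n ih =>
    rw [res_succ, List.suffix_cons_iff] at h
    rcases h with rfl | h
    · simp
    · exact ih h

theorem res_suffix_res (x : ℕ → σ) {m n : ℕ} (h : m ≤ n) : res x m <:+ res x n := by
  induction n, h using Nat.le_induction with
  | base => exact List.suffix_rfl
  | succ n _ ih => exact ih.trans (by rw [res_succ]; exact List.suffix_cons _ _)

theorem exists_minimal_suffix {w : List σ} (hw : w ∈ S) : ∃ u ∈ minimal S, u <:+ w := by
  induction hn : w.length using Nat.strong_induction_on generalizing w with
  | _ n ih =>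
    by_cases h : w ∈ minimal S
    · exact ⟨w, h, List.suffix_rfl⟩
    · simp only [minimal, mem_ofPred_eq, hw, true_and, not_forall] at h
      obtain ⟨u, hu, huw, hne⟩ := h
      have hlt : u.length < n := by
        rw [← hn]
        exact lt_of_le_of_ne huw.length_le fun h => hne (huw.eq_of_length h)
      obtain ⟨v, hv, hvu⟩ := ih _ hlt hu rfl
      exact ⟨v, hv, hvu.trans huw⟩

theorem cylinders_mono (h : S ⊆ T) : cylinders S ⊆ cylinders T :=
  fun _ ⟨n, hn⟩ => ⟨n, h hn⟩

theorem cylinders_subset_minimal : cylinders S ⊆ cylinders (minimal S) := by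
  rintro x ⟨n, hn⟩
  obtain ⟨u, hu, hux⟩ := exists_minimal_suffix hn
  exact ⟨u.length, eq_res_of_suffix hux ▸ hu⟩

theorem content_le (h : E ⊆ cylinders W) : content θ E ≤ cost θ W :=
  iInf₂_le (f := fun W (_ : E ⊆ cylinders W) => cost θ W) W h

theorem content_mono (h : E ⊆ F) : content θ E ≤ content θ F :=
  le_iInf₂ fun _ hW => content_le (h.trans hW)

theorem content_inter_cyl_le (w : List σ) : content θ (E ∩ cyl w) ≤ θ ^ w.length := by
  classical
  refine (content_le (W := {w}) ?_).trans ?_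
  · rw [cylinders_singleton]; exact inter_subset_right
  · refine (tsum_eq_single w fun u hu => ?_).trans_le ?_
    · simp [hu]
    · simp

theorem content_le_one : content θ E ≤ 1 := by
  simpa [cyl_nil] using content_inter_cyl_le (θ := θ) (E := E) []

theorem content_ne_top : content θ E ≠ ∞ := ne_top_of_le_ne_top ENNReal.one_ne_top content_le_one

theorem exists_cover (θ : ℝ≥0∞) (E : Set (ℕ → σ)) {δ : ℝ≥0∞} (hδ : δ ≠ 0) :
    ∃ W, E ⊆ cylinders W ∧ cost θ W ≤ content θ E + δ := by
  have h : content θ E < content θ E + δ := ENNReal.lt_add_right content_ne_top hδ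
  conv_lhs at h => rw [content]
  simp only [iInf_lt_iff] at h
  obtain ⟨W, hW, h⟩ := h
  exact ⟨W, hW, h.le⟩

theorem content_empty : content θ (∅ : Set (ℕ → σ)) = 0 := by
  refine le_antisymm ((content_le (W := ∅) (by simp)).trans ?_) zero_le
  simp [cost]

theorem content_iUnion_le {ι : Type*} [Fintype ι] (E : ι → Set (ℕ → σ)) :
    content θ (⋃ i, E i) ≤ ∑ i, content θ (E i) := by
  refine ENNReal.le_of_forall_pos_le_add fun ε hε _ => ?_
  obtain ⟨δ, hδ, hδε⟩ := ENNReal.exists_pos_sum_of_countable' (ε := ε) (by positivity) ι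
  choose W hW hc using fun i => exists_cover θ (E i) (hδ i).ne'
  have h1 : content θ (⋃ i, E i) ≤ cost θ (⋃ i, W i) := content_le <| iUnion_subset fun i =>
    (hW i).trans (cylinders_mono (subset_iUnion W i))
  have h2 : cost θ (⋃ i, W i) ≤ ∑ i, cost θ (W i) := by
    simp only [cost]
    rw [← Summable.tsum_finsetSum fun i _ => ENNReal.summable]
    refine ENNReal.tsum_le_tsum fun w => ?_
    by_cases h : w ∈ ⋃ i, W i
    · obtain ⟨i, hi⟩ := mem_iUnion.1 h
      rw [indicator_of_mem h]
      refine le_trans ?_ (Finset.single_le_sum (fun _ _ => zero_le) (Finset.mem_univ i))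
      rw [indicator_of_mem hi]
    · simp [h]
  calc _ ≤ ∑ i, (content θ (E i) + δ i) := h1.trans (h2.trans (Finset.sum_le_sum fun i _ => hc i))
    _ ≤ _ := by
      rw [Finset.sum_add_distrib]
      gcongr
      exact (ENNReal.sum_le_tsum Finset.univ).trans hδε.le

/-- Strong subadditivity of the content, at the level of covers. -/
theorem cost_minimal_add_content_le (hS : E ⊆ cylinders S) (hT : E ⊆ cylinders T) :
    cost θ (minimal (S ∪ T)) + content θ E ≤ cost θ S + cost θ T := by
  classical
  set V := minimal (S ∪ T) with hV
  set U : Set (List σ) := ((S ∪ T) \ V) ∪ (S ∩ T) with hU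
  have hcov : E ⊆ cylinders U := by
    intro x hx
    obtain ⟨i, hi⟩ := hS hx
    obtain ⟨j, hj⟩ := hT hx
    rcases lt_trichotomy i j with h | rfl | h
    · refine ⟨j, Or.inl ⟨Or.inr hj, fun hm => ?_⟩⟩
      have := congrArg List.length (hm.2 _ (Or.inl hi) (res_suffix_res x h.le))
      simp at this; omega
    · exact ⟨i, Or.inr ⟨hi, hj⟩⟩
    · refine ⟨i, Or.inl ⟨Or.inl hi, fun hm => ?_⟩⟩
      have := congrArg List.length (hm.2 _ (Or.inr hj) (res_suffix_res x h.le))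
      simp at this; omega
  have hVS : V ⊆ S ∪ T := fun w hw => hw.1
  calc _ ≤ cost θ V + cost θ U := by gcongr; exact content_le hcov
    _ ≤ _ := by
      simp only [cost]
      rw [← ENNReal.tsum_add, ← ENNReal.tsum_add]
      refine ENNReal.tsum_le_tsum fun w => ?_
      have := @hVS w
      by_cases h1 : w ∈ S <;> by_cases h2 : w ∈ T <;> by_cases h3 : w ∈ V <;>
        simp_all [indicator]

theorem content_iUnion_of_monotone {A : ℕ → Set (ℕ → σ)} (hA : Monotone A) :
    content θ (⋃ n, A n) ≤ ⨆ n, content θ (A n) := by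
  classical
  refine ENNReal.le_of_forall_pos_le_add fun ε hε _ => ?_
  obtain ⟨δ, hδ, hδε⟩ := ENNReal.exists_pos_sum_of_countable' (ε := ε) (by positivity) ℕ
  choose W hW hc using fun n => exists_cover θ (A n) (hδ n).ne'
  let V : ℕ → Set (List σ) := fun n =>
    Nat.rec (motive := fun _ => Set (List σ)) (W 0) (fun n V => minimal (V ∪ W (n + 1))) n
  have hV : ∀ n, V (n + 1) = minimal (V n ∪ W (n + 1)) := fun n => rfl
  have hcov : ∀ n, A n ⊆ cylinders (V n) := by
    intro n
    cases n with
    | zero => exact hW 0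
    | succ n =>
      rw [hV]
      exact (hW _).trans ((cylinders_mono subset_union_right).trans cylinders_subset_minimal)
  have hcost : ∀ n, cost θ (V n) ≤ content θ (A n) + ∑ k ∈ Finset.range (n + 1), δ k := by
    intro n
    induction n with
    | zero => simpa using! hc 0
    | succ n ih =>
      have h := cost_minimal_add_content_le (θ := θ) (hcov n)
        ((hA n.le_succ).trans (hW (n + 1)))
      rw [← hV] at h
      refine (ENNReal.add_le_add_iff_right (content_ne_top (θ := θ) (E := A n))).1 ?_
      calc _ ≤ _ := h
        _ ≤ (content θ (A n) + ∑ k ∈ Finset.range (n + 1), δ k) +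
            (content θ (A (n + 1)) + δ (n + 1)) := add_le_add ih (hc _)
        _ = _ := by rw [Finset.sum_range_succ _ (n + 1)]; ring
  let V' : Set (List σ) := {w | ∀ᶠ n in atTop, w ∈ V n}
  have hcov' : ⋃ n, A n ⊆ cylinders V' := by
    refine iUnion_subset fun n₀ x hx => ?_
    let P : ℕ → Prop := fun l => ∃ n ≥ n₀, res x l ∈ V n
    have : DecidablePred P := Classical.decPred P
    have hex : ∃ l, P l := by
      obtain ⟨l, hl⟩ := hcov n₀ hx
      exact ⟨l, n₀, le_rfl, hl⟩
    obtain ⟨n, hn, hl⟩ := Nat.find_spec hex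
    suffices h : ∀ k ≥ n, res x (Nat.find hex) ∈ V k from
      ⟨Nat.find hex, eventually_atTop.2 ⟨n, h⟩⟩
    intro k hk
    induction k, hk using Nat.le_induction with
    | base => exact hl
    | succ k hk ih =>
      obtain ⟨u, hu, hux⟩ := exists_minimal_suffix (S := V k ∪ W (k + 1)) (Or.inl ih)
      rw [← hV] at hu
      have hu' := eq_res_of_suffix hux
      have hmin : Nat.find hex ≤ u.length :=
        Nat.find_min' hex ⟨k + 1, by omega, hu' ▸ hu⟩
      have : u = res x (Nat.find hex) :=
        hux.eq_of_length (le_antisymm hux.length_le (by simpa using hmin))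
      exact this ▸ hu
  refine (content_le hcov').trans ?_
  rw [cost, ENNReal.tsum_eq_iSup_sum]
  refine iSup_le fun s => ?_
  have hev : ∀ᶠ n in atTop, ∀ w ∈ s, w ∈ V' → w ∈ V n := by
    rw [Filter.eventually_all_finset]
    intro w _
    by_cases h : w ∈ V'
    · filter_upwards [h] with n hn _ using hn
    · exact Eventually.of_forall fun n h' => absurd h' h
  obtain ⟨n, hn⟩ := hev.exists
  calc _ ≤ ∑ w ∈ s, (V n).indicator (fun w => θ ^ w.length) w := by
        refine Finset.sum_le_sum fun w hw => ?_
        by_cases h : w ∈ V'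
        · rw [indicator_of_mem h, indicator_of_mem (hn w hw h)]
        · simp [h]
    _ ≤ cost θ (V n) := ENNReal.sum_le_tsum s
    _ ≤ _ := hcost n
    _ ≤ _ := by
      gcongr
      · exact le_iSup (fun n => content θ (A n)) n
      · exact (ENNReal.sum_le_tsum _).trans hδε.le

end TreeContent

namespace TreeContent

open PiNat Filter Topology

variable {σ : Type*} {θ : ℝ≥0∞} {W : Set (List σ)}

theorem cylinder_subset_cylinders {x : ℕ → σ} {n : ℕ} (h : res x n ∈ W) :
    cylinder x n ⊆ cylinders W := by
  intro y hy
  rw [cylinder_eq_res] at hy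
  exact ⟨n, (show res y n = res x n from hy) ▸ h⟩

section Topology

variable [TopologicalSpace σ] [DiscreteTopology σ]

theorem isOpen_cylinders : IsOpen (cylinders W) := by
  rw [isOpen_iff_mem_nhds]
  rintro x ⟨n, hn⟩
  exact mem_of_superset ((isOpen_cylinder _ x n).mem_nhds (self_mem_cylinder x n))
    (cylinder_subset_cylinders hn)

theorem isOpen_cyl (w : List σ) : IsOpen (cyl w) := by
  rw [← cylinders_singleton]; exact isOpen_cylinders

theorem exists_cylinder_subset_of_isCompact {K U : Set (ℕ → σ)} (hK : IsCompact K)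
    (hU : IsOpen U) (hKU : K ⊆ U) : ∃ j, ∀ x ∈ K, cylinder x j ⊆ U := by
  refine hK.induction_on (p := fun S => ∃ j, ∀ x ∈ S, cylinder x j ⊆ U) ⟨0, by simp⟩ ?_ ?_ ?_
  · rintro s t hst ⟨j, hj⟩
    exact ⟨j, fun x hx => hj x (hst hx)⟩
  · rintro s t ⟨i, hi⟩ ⟨j, hj⟩
    refine ⟨max i j, fun x hx => ?_⟩
    rcases hx with hx | hx
    · exact (cylinder_anti x (le_max_left i j)).trans (hi x hx)
    · exact (cylinder_anti x (le_max_right i j)).trans (hj x hx)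
  · intro x hx
    obtain ⟨_, ⟨x₀, n, rfl⟩, hxn, hn⟩ :=
      (isTopologicalBasis_cylinders fun _ : ℕ => σ).mem_nhds_iff.1 (hU.mem_nhds (hKU hx))
    refine ⟨cylinder x₀ n, mem_nhdsWithin_of_mem_nhds
      ((isOpen_cylinder _ x₀ n).mem_nhds hxn), n, fun y hy => ?_⟩
    rwa [mem_cylinder_iff_eq.1 hy]

/-- Analytic sets of positive content contain compact sets of positive content. -/
theorem exists_isCompact_subset_of_analyticSet {A : Set (ℕ → σ)} (hA : AnalyticSet A)
    (h0 : content θ A ≠ 0) : ∃ K ⊆ A, IsCompact K ∧ content θ K ≠ 0 := by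
  rw [AnalyticSet] at hA
  rcases hA with rfl | ⟨f, hf, rfl⟩
  · exact absurd content_empty h0
  obtain ⟨a, ha0, ha⟩ := exists_between (pos_iff_ne_zero.2 h0)
  have hstep : ∀ (D : Set (ℕ → ℕ)) (j : ℕ), ∃ k : ℕ, a < content θ (f '' D) →
      a < content θ (f '' (D ∩ {x | x j ≤ k})) := by
    intro D j
    by_cases h : a < content θ (f '' D)
    · have hmono : Monotone fun k : ℕ => f '' (D ∩ {x | x j ≤ k}) := by
        intro k l hkl
        refine image_mono (inter_subset_inter_right _ fun x hx => ?_)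
        exact le_trans (show x j ≤ k from hx) hkl
      have hun : ⋃ k : ℕ, f '' (D ∩ {x | x j ≤ k}) = f '' D := by
        rw [← image_iUnion, ← inter_iUnion]
        congr 1
        refine inter_eq_left.2 fun x _ => mem_iUnion.2 ⟨x j, ?_⟩
        exact le_refl (x j)
      have := content_iUnion_of_monotone (θ := θ) hmono
      rw [hun] at this
      obtain ⟨k, hk⟩ := lt_iSup_iff.1 (h.trans_le this)
      exact ⟨k, fun _ => hk⟩
    · exact ⟨0, fun h' => absurd h' h⟩
  choose k hk using hstep
  let D : ℕ → Set (ℕ → ℕ) := fun j =>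
    Nat.rec (motive := fun _ => Set (ℕ → ℕ)) univ (fun j D => D ∩ {x | x j ≤ k D j}) j
  have hD : ∀ j, D (j + 1) = D j ∩ {x | x j ≤ k (D j) j} := fun j => rfl
  have hDa : ∀ j, a < content θ (f '' D j) := by
    intro j
    induction j with
    | zero => rw [show D 0 = univ from rfl, image_univ]; exact ha
    | succ j ih => rw [hD]; exact hk _ _ ih
  have hDmem : ∀ j x, x ∈ D j ↔ ∀ i < j, x i ≤ k (D i) i := by
    intro j x
    induction j with
    | zero => simp [show D 0 = univ from rfl]
    | succ j ih =>
      rw [hD, mem_inter_iff, ih]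
      constructor
      · rintro ⟨h1, h2⟩ i hi
        rcases Nat.lt_succ_iff_lt_or_eq.1 hi with h | rfl
        exacts [h1 i h, h2]
      · intro h
        exact ⟨fun i hi => h i (by omega), h j (by omega)⟩
  set C : Set (ℕ → ℕ) := univ.pi fun i => Iic (k (D i) i) with hC
  have hCc : IsCompact C := isCompact_univ_pi fun i => (finite_Iic _).isCompact
  refine ⟨f '' C, image_subset_range _ _, hCc.image hf, fun h => ?_⟩
  obtain ⟨W, hW, hcW⟩ := exists_cover θ (f '' C) ha0.ne'
  rw [h, zero_add] at hcW
  obtain ⟨j, hj⟩ := exists_cylinder_subset_of_isCompact hCc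
    ((isOpen_cylinders (W := W)).preimage hf) (image_subset_iff.1 hW)
  have hsub : f '' D j ⊆ cylinders W := by
    rintro _ ⟨x, hx, rfl⟩
    rw [hDmem] at hx
    refine hj (fun i => if i < j then x i else 0) ?_ ?_
    · intro i _
      by_cases h : i < j
      · simpa [h] using hx i h
      · simp [h]
    · intro i hi
      simp [hi]
  exact absurd ((content_le hsub).trans hcW) (not_le.2 (hDa j))

end Topology

theorem cyl_subset_cyl {u w : List σ} (h : u.length ≤ w.length) {x : ℕ → σ}
    (hu : x ∈ cyl u) (hw : x ∈ cyl w) : cyl w ⊆ cyl u := by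
  intro y hy
  have hu : res x u.length = u := hu
  have hw : res x w.length = w := hw
  have hy : res y w.length = w := hy
  show res y u.length = u
  rw [← hu, res_length, res_eq_res]
  rw [← hw, res_length, res_eq_res] at hy
  exact fun i hi => hy (by omega)

theorem cyl_eq_iUnion (w : List σ) : cyl w = ⋃ a, cyl (a :: w) := by
  ext x
  simp [cyl]

variable [TopologicalSpace σ] [DiscreteTopology σ] [Fintype σ] [MeasurableSpace σ] [BorelSpace σ]

theorem exists_measure_cyl_le (K : Set (ℕ → σ)) (θ : ℝ≥0∞) (k : ℕ) (w : List σ) :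
    ∃ ρ : Measure (ℕ → σ), ρ univ = content θ (K ∩ cyl w) ∧ ρ (K ∩ cyl w)ᶜ = 0 ∧
      ∀ u, u.length ≤ w.length + k → ρ (cyl u) ≤ content θ (K ∩ cyl u) := by
  classical
  have hdisj : ∀ {ρ : Measure (ℕ → σ)} {w u : List σ}, ρ (K ∩ cyl w)ᶜ = 0 →
      (¬ ∃ x, x ∈ cyl u ∧ x ∈ cyl w) → ρ (cyl u) = 0 := by
    intro ρ w u h hne
    have hsub : cyl u ⊆ (K ∩ cyl w)ᶜ := fun x hx hx' => hne ⟨x, hx, hx'.2⟩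
    exact measure_mono_null hsub h
  have hshort : ∀ {ρ : Measure (ℕ → σ)} {w u : List σ}, ρ univ = content θ (K ∩ cyl w) →
      ρ (K ∩ cyl w)ᶜ = 0 → u.length ≤ w.length → ρ (cyl u) ≤ content θ (K ∩ cyl u) := by
    intro ρ w u h1 h2 hu
    by_cases hne : ∃ x, x ∈ cyl u ∧ x ∈ cyl w
    · obtain ⟨x, hxu, hxw⟩ := hne
      calc ρ (cyl u) ≤ ρ univ := measure_mono (subset_univ _)
        _ ≤ _ := h1.trans_le (content_mono (inter_subset_inter_right _
          (cyl_subset_cyl hu hxu hxw)))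
    · rw [hdisj h2 hne]; exact zero_le
  induction k generalizing w with
  | zero =>
    rcases (K ∩ cyl w).eq_empty_or_nonempty with h | ⟨x, hx⟩
    · refine ⟨0, by simp [h, content_empty], by simp, by simp⟩
    · have h2 : (content θ (K ∩ cyl w) • Measure.dirac x) (K ∩ cyl w)ᶜ = 0 := by
        rw [Measure.smul_apply, Measure.dirac_apply]
        simp [hx.1, hx.2]
      exact ⟨content θ (K ∩ cyl w) • Measure.dirac x, by simp, h2,
        fun u hu => hshort (by simp) h2 hu⟩
  | succ k ih =>
    choose ρ h1 h2 h3 using fun a => ih (a :: w)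
    set Λ := ∑ a, content θ (K ∩ cyl (a :: w)) with hΛ
    have hle : content θ (K ∩ cyl w) ≤ Λ := by
      rw [cyl_eq_iUnion w, inter_iUnion]
      exact content_iUnion_le _
    have hΛtop : Λ ≠ ∞ := ENNReal.sum_ne_top.2 fun a _ => content_ne_top
    by_cases hΛ0 : Λ = 0
    · refine ⟨0, ?_, by simp, by simp⟩
      rw [hΛ0] at hle
      simpa using (hle.antisymm zero_le).symm
    set q := content θ (K ∩ cyl w) / Λ with hq
    have hq1 : q ≤ 1 := ENNReal.div_le_of_le_mul (by simpa using hle)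
    have huniv : (q • ∑ a, ρ a) univ = content θ (K ∩ cyl w) := by
      simp only [Measure.smul_apply, Measure.coe_finsetSum, Finset.sum_apply, h1, smul_eq_mul]
      exact ENNReal.div_mul_cancel hΛ0 hΛtop
    have hcompl : (q • ∑ a, ρ a) (K ∩ cyl w)ᶜ = 0 := by
      simp only [Measure.smul_apply, Measure.coe_finsetSum, Finset.sum_apply, smul_eq_mul,
        mul_eq_zero, Finset.sum_eq_zero_iff]
      refine Or.inr fun a _ => measure_mono_null (compl_subset_compl.2 ?_) (h2 a)
      rw [cyl_eq_iUnion w]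
      exact inter_subset_inter_right _ (subset_iUnion (fun a => cyl (a :: w)) a)
    refine ⟨q • ∑ a, ρ a, huniv, hcompl, fun u hu => ?_⟩
    by_cases hul : u.length ≤ w.length
    · exact hshort huniv hcompl hul
    by_cases hne : ∃ x, x ∈ cyl u ∧ x ∈ cyl w
    · obtain ⟨x, hxu, hxw⟩ := hne
      rw [cyl_eq_iUnion w] at hxw
      obtain ⟨a, ha⟩ := mem_iUnion.1 hxw
      have hb : ∀ b, b ≠ a → ρ b (cyl u) = 0 := by
        intro b hb
        refine hdisj (h2 b) ?_
        rintro ⟨y, hyu, hyb⟩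
        have hya : y ∈ cyl (a :: w) := cyl_subset_cyl (by simp; omega) ha hxu hyu
        have e1 : res y (b :: w).length = b :: w := hyb
        have e2 : res y (a :: w).length = a :: w := hya
        simp only [List.length_cons] at e1 e2
        rw [e1] at e2
        exact hb (List.cons.inj e2).1
      calc (q • ∑ a, ρ a) (cyl u) = q * ρ a (cyl u) := by
            simp only [Measure.smul_apply, Measure.coe_finsetSum, Finset.sum_apply, smul_eq_mul]
            rw [Finset.sum_eq_single a (fun b _ h => hb b h) (by simp)]
        _ ≤ ρ a (cyl u) := mul_le_of_le_one_left zero_le hq1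
        _ ≤ _ := h3 a u (by simp; omega)
    · rw [hdisj hcompl hne]; exact zero_le

/-- **Frostman's lemma** on a tree, for compact sets. -/
theorem exists_frostman_measure_of_isCompact {K : Set (ℕ → σ)} (hK : IsCompact K)
    (h0 : content θ K ≠ 0) : ∃ μ : Measure (ℕ → σ), IsProbabilityMeasure μ ∧ μ Kᶜ = 0 ∧
      ∀ w, μ (cyl w) ≤ (content θ K)⁻¹ * θ ^ w.length := by
  choose ρ h1 h2 h3 using fun k => exists_measure_cyl_le K θ k []
  simp only [cyl_nil, inter_univ, List.length_nil, zero_add] at h1 h2 h3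
  have hp : ∀ k, IsProbabilityMeasure ((content θ K)⁻¹ • ρ k) := fun k =>
    ⟨by rw [Measure.smul_apply, h1, smul_eq_mul, ENNReal.inv_mul_cancel h0 content_ne_top]⟩
  let P : ℕ → ProbabilityMeasure (ℕ → σ) := fun k => ⟨(content θ K)⁻¹ • ρ k, hp k⟩
  obtain ⟨μ, -, hμ⟩ := isCompact_univ.ultrafilter_le_nhds (f := Ultrafilter.map P (hyperfilter ℕ))
    (by simp)
  have hμ : Tendsto P (hyperfilter ℕ) (𝓝 μ) := hμ
  have key : ∀ {G : Set (ℕ → σ)} {b : ℝ≥0∞} {k₀ : ℕ}, IsOpen G → (∀ k ≥ k₀, ρ k G ≤ b) →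
      (μ : Measure (ℕ → σ)) G ≤ (content θ K)⁻¹ * b := by
    intro G b k₀ hG hb
    refine (ProbabilityMeasure.le_liminf_measure_open_of_tendsto hμ hG).trans ?_
    refine liminf_le_of_frequently_le' (Eventually.frequently ?_)
    have : ∀ᶠ k in (hyperfilter ℕ : Filter ℕ), k₀ ≤ k :=
      (Nat.hyperfilter_le_atTop) (eventually_ge_atTop k₀)
    filter_upwards [this] with k hk
    show (content θ K)⁻¹ * ρ k G ≤ _
    gcongr
    exact hb k hk
  refine ⟨μ, inferInstance, ?_, fun w => ?_⟩
  · simpa using key (k₀ := 0) (b := 0) hK.isClosed.isOpen_compl fun k _ => (h2 k).le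
  · exact key (k₀ := w.length) (isOpen_cyl w) fun k hk =>
      (h3 k w hk).trans (content_inter_cyl_le w)

end TreeContent

/-! ### Frostman's lemma in `ℝᴺ` -/

/-- A measure whose balls satisfy `μ (closedBall x r) ≤ C * r ^ t`. -/
def IsFrostman {X : Type*} [PseudoMetricSpace X] [MeasurableSpace X] (μ : Measure X) (t : ℝ) :
    Prop :=
  ∃ C : ℝ≥0∞, C ≠ ∞ ∧ ∀ x : X, ∀ r : ℝ, 0 < r → μ (closedBall x r) ≤ C * ENNReal.ofReal r ^ t

namespace BinaryCoding

open PiNat Filter Topology TreeContent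

variable {N : ℕ}

/-- The point of the unit cube with the given binary digits. -/
noncomputable def code (x : ℕ → Fin N → Fin 2) : Fin N → ℝ := fun i => Real.ofDigits fun k => x k i

theorem continuous_code : Continuous (code (N := N)) :=
  continuous_pi fun i => Real.continuous_ofDigits.comp
    (continuous_pi fun k => (continuous_apply i).comp (continuous_apply k))

theorem exists_code_eq {p : Fin N → ℝ} (hp : p ∈ Icc (0 : Fin N → ℝ) 1) : ∃ x, code x = p := by
  have : ∀ i, ∃ d : ℕ → Fin 2, Real.ofDigits d = p i := fun i => by
    obtain ⟨d, -, hd⟩ := Real.ofDigits_SurjOn (b := 2) (by norm_num) ⟨hp.1 i, hp.2 i⟩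
    exact ⟨d, hd⟩
  choose d hd using this
  exact ⟨fun k i => d i k, funext hd⟩

theorem ediam_code_image_cyl_le (w : List (Fin N → Fin 2)) :
    ediam (code '' cyl w) ≤ (2⁻¹ : ℝ≥0∞) ^ w.length := by
  refine ediam_le ?_
  rintro _ ⟨x, hx, rfl⟩ _ ⟨y, hy, rfl⟩
  have hxy := res_eq_res.1 ((show res x w.length = w from hx).trans
    (show res y w.length = w from hy).symm)
  refine (edist_pi_le_iff).2 fun i => ?_
  rw [edist_dist, Real.dist_eq, ← ENNReal.inv_pow, ← ENNReal.ofReal_ofNat 2,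
    ← ENNReal.ofReal_pow (by norm_num), ← ENNReal.ofReal_inv_of_pos (by positivity)]
  refine ENNReal.ofReal_le_ofReal ?_
  have := Real.abs_ofDigits_sub_ofDigits_le (x := fun k => x k i) (y := fun k => y k i)
    (n := w.length) fun k hk => by rw [hxy hk]
  simpa [code] using this

/-- The natural number whose binary digits are the first `k` terms of `d`. -/
def leadingNat (d : ℕ → Fin 2) : ℕ → ℕ
  | 0 => 0
  | k + 1 => 2 * leadingNat d k + d k

theorem leadingNat_injective {d d' : ℕ → Fin 2} {k : ℕ} (h : leadingNat d k = leadingNat d' k) :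
    ∀ j < k, d j = d' j := by
  induction k with
  | zero => simp
  | succ k ih =>
    simp only [leadingNat] at h
    have h1 := (d k).isLt
    have h2 := (d' k).isLt
    intro j hj
    rcases Nat.lt_succ_iff_lt_or_eq.1 hj with hj | rfl
    · exact ih (by omega) j hj
    · exact Fin.ext (by omega)

theorem sum_ofDigitsTerm (d : ℕ → Fin 2) (k : ℕ) :
    ∑ i ∈ Finset.range k, Real.ofDigitsTerm d i = leadingNat d k * ((2 : ℝ) ^ k)⁻¹ := by
  induction k with
  | zero => simp [leadingNat]
  | succ k ih =>
    rw [Finset.sum_range_succ, ih, leadingNat, Real.ofDigitsTerm]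
    push_cast
    field_simp
    ring

theorem two_pow_mul_ofDigits (d : ℕ → Fin 2) (k : ℕ) :
    2 ^ k * Real.ofDigits d ∈ Icc (leadingNat d k : ℝ) (leadingNat d k + 1) := by
  have h := Real.ofDigits_eq_sum_add_ofDigits d k
  rw [sum_ofDigitsTerm] at h
  push_cast at h
  have h' : 2 ^ k * Real.ofDigits d = leadingNat d k + Real.ofDigits fun i => d (i + k) := by
    rw [h]; field_simp
  rw [h']
  exact ⟨by linarith [Real.ofDigits_nonneg fun i => d (i + k)],
    by linarith [Real.ofDigits_le_one fun i => d (i + k)]⟩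

theorem exists_cyl_cover (p : Fin N → ℝ) (k : ℕ) :
    code ⁻¹' closedBall p ((2 : ℝ) ^ k)⁻¹ ⊆
      ⋃ a : Fin N → Fin 4, {x | ∀ i, (leadingNat (fun j => x j i) k : ℤ) = ⌈2 ^ k * p i - 2⌉ + a i} := by
  intro x hx
  have hx : dist (code x) p ≤ ((2 : ℝ) ^ k)⁻¹ := hx
  rw [dist_pi_le_iff (by positivity)] at hx
  have : ∀ i, ∃ a : Fin 4, (leadingNat (fun j => x j i) k : ℤ) = ⌈2 ^ k * p i - 2⌉ + a := fun i => by
    have h1 := two_pow_mul_ofDigits (fun j => x j i) k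
    have h2 := abs_le.1 ((Real.dist_eq _ _).symm.trans_le (hx i))
    have h3 : (2 : ℝ) ^ k * ((2 : ℝ) ^ k)⁻¹ = 1 := by field_simp
    have h4 : 2 ^ k * code x i - 2 ^ k * p i ∈ Icc (-1 : ℝ) 1 := by
      constructor <;> rw [← mul_sub]
      · calc (-1 : ℝ) = 2 ^ k * -((2 : ℝ) ^ k)⁻¹ := by rw [mul_neg, h3]
          _ ≤ _ := by gcongr; exact h2.1
      · calc _ ≤ (2 : ℝ) ^ k * ((2 : ℝ) ^ k)⁻¹ := by gcongr; exact h2.2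
          _ = 1 := h3
    have h1' : 2 ^ k * code x i ∈ _ := h1
    set M : ℤ := (leadingNat (fun j => x j i) k : ℤ) with hM
    have hMr : (leadingNat (fun j => x j i) k : ℝ) = (M : ℝ) := by simp [hM]
    rw [hMr] at h1'
    have h5 : ⌈2 ^ k * p i - 2⌉ ≤ M := Int.ceil_le.2 (by linarith [h1'.2, h4.1])
    have h6 : M ≤ ⌈2 ^ k * p i - 2⌉ + 3 := by
      have := Int.le_ceil (2 ^ k * p i - 2)
      have : (M : ℝ) ≤ ((⌈2 ^ k * p i - 2⌉ + 3 : ℤ) : ℝ) := by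
        push_cast; linarith [h1'.1, h4.2]
      exact_mod_cast this
    exact ⟨⟨(M - ⌈2 ^ k * p i - 2⌉).toNat, by omega⟩, by
      show M = _ + (((M - ⌈2 ^ k * p i - 2⌉).toNat : ℕ) : ℤ)
      omega⟩
  choose a ha using this
  exact mem_iUnion.2 ⟨a, ha⟩

theorem measure_preimage_code_le (μ : Measure (ℕ → Fin N → Fin 2)) {D θ : ℝ≥0∞}
    (h : ∀ w, μ (cyl w) ≤ D * θ ^ w.length) (p : Fin N → ℝ) (k : ℕ) :
    μ (code ⁻¹' closedBall p ((2 : ℝ) ^ k)⁻¹) ≤ 4 ^ N * (D * θ ^ k) := by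
  refine (measure_mono (exists_cyl_cover p k)).trans ((measure_iUnion_fintype_le _ _).trans ?_)
  calc _ ≤ ∑ _a : Fin N → Fin 4, D * θ ^ k := by
        refine Finset.sum_le_sum fun a _ => ?_
        rcases eq_empty_or_nonempty
          {x : ℕ → Fin N → Fin 2 | ∀ i, (leadingNat (fun j => x j i) k : ℤ) = ⌈2 ^ k * p i - 2⌉ + a i}
          with he | ⟨x, hx⟩
        · rw [he]; simp
        · refine (measure_mono fun y hy => ?_).trans ((h (res x k)).trans (by simp))
          show res y (res x k).length = res x k
          rw [res_length, res_eq_res]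
          intro j hj
          funext i
          exact leadingNat_injective (d := fun j => y j i) (d' := fun j => x j i)
            (by have h1 := hx i; have h2 := hy i; omega) j hj
    _ = _ := by simp

theorem hausdorffMeasure_eq_zero {A : Set (Fin N → ℝ)} (hA : A ⊆ Icc 0 1) {t : ℝ} (ht : 0 < t)
    (h : content ((2⁻¹ : ℝ≥0∞) ^ t) (code ⁻¹' A) = 0) : μH[t] A = 0 := by
  set θ : ℝ≥0∞ := (2⁻¹ : ℝ≥0∞) ^ t with hθ
  have hθ0 : θ ≠ 0 := by
    rw [hθ]; simp [ENNReal.rpow_eq_zero_iff]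
  have hθ1 : θ < 1 := ENNReal.rpow_lt_one (by simp) ht
  choose W hW hWc using fun j : ℕ => exists_cover θ (code ⁻¹' A) (pow_ne_zero j hθ0)
  simp only [h, zero_add] at hWc
  have hlen : ∀ j, ∀ w ∈ W j, j ≤ w.length := fun j w hw => by
    have h1 : θ ^ w.length ≤ θ ^ j := by
      refine le_trans ?_ (hWc j)
      refine le_trans (le_of_eq ?_) (ENNReal.le_tsum w)
      rw [indicator_of_mem hw]
    by_contra hlt
    push Not at hlt
    refine absurd h1 (not_le.2 ?_)
    rw [← ENNReal.rpow_natCast, ← ENNReal.rpow_natCast]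
    exact ENNReal.rpow_lt_rpow_of_exponent_gt (pos_iff_ne_zero.2 hθ0) hθ1 (by exact_mod_cast hlt)
  have key := Measure.hausdorffMeasure_le_liminf_tsum (X := Fin N → ℝ) (l := atTop) (ι := fun j => W j) t A
    (fun j => (2⁻¹ : ℝ≥0∞) ^ j) (ENNReal.tendsto_pow_atTop_nhds_zero_of_lt_one (by simp))
    (fun j w => code '' cyl w.1)
    (Eventually.of_forall fun j w => (ediam_code_image_cyl_le w.1).trans
      (pow_le_pow_right_of_le_one' (by simp) (hlen j w.1 w.2)))
    (Eventually.of_forall fun j p hp => by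
      obtain ⟨x, rfl⟩ := exists_code_eq (hA hp)
      obtain ⟨k, hk⟩ := hW j hp
      exact mem_iUnion.2 ⟨⟨_, hk⟩, x, by simp [cyl], rfl⟩)
  refine le_antisymm (key.trans ?_) zero_le
  have hle : ∀ j, ∑' w : W j, ediam (code '' cyl w.1) ^ t ≤ θ ^ j := fun j => by
    refine le_trans ?_ (hWc j)
    rw [cost, ← tsum_subtype]
    refine ENNReal.tsum_le_tsum fun w => ?_
    calc _ ≤ ((2⁻¹ : ℝ≥0∞) ^ w.1.length) ^ t :=
          ENNReal.rpow_le_rpow (ediam_code_image_cyl_le w.1) ht.le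
      _ = _ := by rw [hθ, ← ENNReal.rpow_natCast, ← ENNReal.rpow_natCast, ← ENNReal.rpow_mul,
                    ← ENNReal.rpow_mul, mul_comm]
  exact (liminf_le_liminf (Eventually.of_forall hle)).trans_eq
    (ENNReal.tendsto_pow_atTop_nhds_zero_of_lt_one hθ1).liminf_eq

theorem exists_frostman_of_subset_cube {A : Set (Fin N → ℝ)} (hA : MeasurableSet A)
    (hAI : A ⊆ Icc 0 1) {t : ℝ} (ht : 0 < t) (h : μH[t] A ≠ 0) :
    ∃ K ⊆ A, IsCompact K ∧ ∃ μ : Measure (Fin N → ℝ), IsProbabilityMeasure μ ∧ μ Kᶜ = 0 ∧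
      IsFrostman μ t := by
  have h0 : content ((2⁻¹ : ℝ≥0∞) ^ t) (code ⁻¹' A) ≠ 0 := fun h' =>
    h (hausdorffMeasure_eq_zero hAI ht h')
  obtain ⟨L, hLA, hL, hL0⟩ := exists_isCompact_subset_of_analyticSet
    (continuous_code.measurable hA).analyticSet h0
  obtain ⟨ρ, hρ, hρL, hρc⟩ := exists_frostman_measure_of_isCompact hL hL0
  have hm := continuous_code (N := N).measurable
  refine ⟨code '' L, image_subset_iff.2 hLA, hL.image continuous_code, ρ.map code,
    Measure.isProbabilityMeasure_map hm.aemeasurable, ?_, ?_⟩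
  · rw [Measure.map_apply hm (hL.image continuous_code).isClosed.measurableSet.compl]
    exact measure_mono_null (fun x hx hxL => hx ⟨x, hxL, rfl⟩) hρL
  set D := (content ((2⁻¹ : ℝ≥0∞) ^ t) L)⁻¹ with hD
  have hDt : D ≠ ∞ := by simp [hD, hL0]
  refine ⟨4 ^ N * D * 2 ^ t + 1, by finiteness, fun p r hr => ?_⟩
  rw [Measure.map_apply hm isClosed_closedBall.measurableSet]
  rcases le_or_gt r 1 with hr1 | hr1
  · obtain ⟨k, hk1, hk2⟩ := exists_nat_pow_near_of_lt_one hr hr1 (y := (2⁻¹ : ℝ))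
      (by norm_num) (by norm_num)
    rw [inv_pow] at hk2
    refine (measure_mono (preimage_mono (closedBall_subset_closedBall hk2))).trans ?_
    refine (measure_preimage_code_le ρ hρc p k).trans ?_
    have : ((2⁻¹ : ℝ≥0∞) ^ t) ^ k ≤ 2 ^ t * ENNReal.ofReal r ^ t := by
      rw [← ENNReal.mul_rpow_of_nonneg _ _ ht.le, ← ENNReal.rpow_natCast, ← ENNReal.rpow_mul,
        mul_comm, ENNReal.rpow_mul, ENNReal.rpow_natCast]
      refine ENNReal.rpow_le_rpow ?_ ht.le
      have h2 : (2⁻¹ : ℝ≥0∞) = ENNReal.ofReal 2⁻¹ := by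
        rw [ENNReal.ofReal_inv_of_pos (by norm_num)]; simp
      rw [h2, ← ENNReal.ofReal_pow (by norm_num), ← ENNReal.ofReal_ofNat 2,
        ← ENNReal.ofReal_mul (by norm_num)]
      refine ENNReal.ofReal_le_ofReal ?_
      rw [pow_succ] at hk1
      linarith
    calc _ ≤ 4 ^ N * (D * (2 ^ t * ENNReal.ofReal r ^ t)) := by gcongr
      _ = 4 ^ N * D * 2 ^ t * ENNReal.ofReal r ^ t := by ring
      _ ≤ _ := by gcongr; exact le_self_add
  · calc _ ≤ (1 : ℝ≥0∞) := prob_le_one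
      _ ≤ 1 * ENNReal.ofReal r ^ t := by
        rw [one_mul]; exact ENNReal.one_le_rpow (by simpa using hr1.le) ht
      _ ≤ _ := by gcongr; exact le_add_self

end BinaryCoding

/-- **Frostman's lemma** for Borel subsets of `ℝᴺ`. -/
theorem exists_frostman_measure {N : ℕ} {A : Set (Fin N → ℝ)} (hA : MeasurableSet A) {t : ℝ}
    (ht : 0 < t) (h : ENNReal.ofReal t < dimH A) :
    ∃ K ⊆ A, IsCompact K ∧ ∃ μ : Measure (Fin N → ℝ), IsProbabilityMeasure μ ∧ μ Kᶜ = 0 ∧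
      IsFrostman μ t := by
  have hcover : A = ⋃ z : Fin N → ℤ, A ∩ Icc (fun i => (z i : ℝ)) (fun i => z i + 1) := by
    rw [← inter_iUnion]
    refine (inter_eq_left.2 fun p _ => mem_iUnion.2 ⟨fun i => ⌊p i⌋, ?_⟩).symm
    exact ⟨fun i => Int.floor_le _, fun i => (Int.lt_floor_add_one _).le⟩
  rw [hcover, dimH_iUnion, lt_iSup_iff] at h
  obtain ⟨z, hz⟩ := h
  let e : (Fin N → ℝ) ≃ᵢ (Fin N → ℝ) := IsometryEquiv.addRight (fun i => -(z i : ℝ))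
  set A' := A ∩ Icc (fun i => (z i : ℝ)) (fun i => z i + 1) with hA'
  have hA'm : MeasurableSet A' := hA.inter measurableSet_Icc
  have hH : μH[t] (e '' A') ≠ 0 := by
    have := hausdorffMeasure_of_lt_dimH (s := e '' A') (d := t.toNNReal)
      (by rw [e.dimH_image]; exact hz)
    rw [Real.coe_toNNReal _ ht.le] at this
    simp [this]
  have hI : e '' A' ⊆ Icc 0 1 := by
    rintro _ ⟨p, hp, rfl⟩
    have h1 := hp.2.1
    have h2 := hp.2.2
    constructor
    · intro i; have := h1 i; simp [e]; simpa using this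
    · intro i; have := h2 i; simp [e]; linarith
  have hm : MeasurableSet (e '' A') := by
    have : e '' A' = e.symm ⁻¹' A' := e.toEquiv.image_eq_preimage_symm A'
    rw [this]
    exact e.symm.continuous.measurable hA'm
  obtain ⟨K, hK, hKc, μ, hμ, hμK, C, hC, hF⟩ :=
    BinaryCoding.exists_frostman_of_subset_cube hm hI ht hH
  have hem := e.symm.continuous.measurable
  refine ⟨e.symm '' K, ?_, hKc.image e.symm.continuous, μ.map e.symm,
    Measure.isProbabilityMeasure_map hem.aemeasurable, ?_, C, hC, fun p r hr => ?_⟩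
  · rintro _ ⟨q, hq, rfl⟩
    obtain ⟨p, hp, rfl⟩ := hK hq
    simpa using hp.1
  · rw [Measure.map_apply hem (hKc.image e.symm.continuous).isClosed.measurableSet.compl]
    exact measure_mono_null (fun x hx hxL => hx ⟨x, hxL, rfl⟩) hμK
  · rw [Measure.map_apply hem isClosed_closedBall.measurableSet, e.symm.preimage_closedBall]
    exact hF _ r hr

/-! ### Potentials and the mass distribution principle -/

section Potential

open Filter Topology

theorem edist_rpow_neg_le_tsum {X : Type*} [MetricSpace X] (x y : X) {s : ℝ} (hs : 0 < s) :
    edist x y ^ (-s) ≤ 1 + ∑' k : ℕ, (closedBall x ((2⁻¹ : ℝ) ^ k)).indicator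
      (fun _ => (2 : ℝ≥0∞) ^ s * ((2 : ℝ≥0∞) ^ s) ^ k) y := by
  rcases le_or_gt 1 (dist x y) with h1 | h1
  · refine le_trans ?_ le_self_add
    refine ENNReal.rpow_le_one_of_one_le_of_neg ?_ (by linarith)
    rw [edist_dist]; simpa using h1
  refine le_trans ?_ le_add_self
  have h2s : (1 : ℝ≥0∞) ≤ 2 ^ s := ENNReal.one_le_rpow (by norm_num) hs
  rcases eq_or_ne x y with rfl | hxy
  · have : ∀ k : ℕ, (1 : ℝ≥0∞) ≤ (closedBall x ((2⁻¹ : ℝ) ^ k)).indicator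
        (fun _ => (2 : ℝ≥0∞) ^ s * ((2 : ℝ≥0∞) ^ s) ^ k) x := fun k => by
      rw [indicator_of_mem (mem_closedBall_self (by positivity))]
      exact one_le_mul_of_one_le_of_one_le h2s (one_le_pow₀ h2s)
    refine le_trans le_top (le_trans (le_of_eq ?_) (ENNReal.tsum_le_tsum this))
    exact (ENNReal.tsum_const_eq_top_of_ne_zero one_ne_zero).symm
  · obtain ⟨k, hk1, hk2⟩ := exists_nat_pow_near_of_lt_one (dist_pos.2 hxy) h1.le (y := (2⁻¹ : ℝ))
      (by norm_num) (by norm_num)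
    refine le_trans ?_ (ENNReal.le_tsum k)
    rw [indicator_of_mem (by rwa [mem_closedBall, dist_comm]), ENNReal.rpow_neg, ← pow_succ',
      ← ENNReal.rpow_natCast, ← ENNReal.rpow_mul, mul_comm, ENNReal.rpow_mul, ENNReal.rpow_natCast,
      ENNReal.inv_le_iff_inv_le, ← ENNReal.inv_rpow]
    refine ENNReal.rpow_le_rpow ?_ hs.le
    have : (((2 : ℝ≥0∞) ^ (k + 1))⁻¹) = ENNReal.ofReal ((2⁻¹ : ℝ) ^ (k + 1)) := by
      rw [inv_pow, ENNReal.ofReal_inv_of_pos (by positivity), ENNReal.ofReal_pow (by norm_num)]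
      simp
    rw [this, edist_dist]
    exact ENNReal.ofReal_le_ofReal hk1.le

variable {X : Type*} [MetricSpace X] [MeasurableSpace X] [BorelSpace X] {μ : Measure X}

/-- The potentials of a Frostman measure are bounded. -/
theorem IsFrostman.exists_lintegral_edist_le [IsFiniteMeasure μ] {s t : ℝ} (hμ : IsFrostman μ t)
    (hs : 0 < s) (hst : s < t) :
    ∃ C : ℝ≥0∞, C ≠ ∞ ∧ ∀ x, ∫⁻ y, edist x y ^ (-s) ∂μ ≤ C := by
  obtain ⟨C, hC, h⟩ := hμ
  set q : ℝ≥0∞ := 2 ^ s * (2⁻¹) ^ t with hq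
  have hq1 : q < 1 := by
    rw [hq, ENNReal.inv_rpow, ← ENNReal.rpow_neg, ← ENNReal.rpow_add _ _ (by simp) (by simp)]
    exact ENNReal.rpow_lt_one_of_one_lt_of_neg (by simp) (by linarith)
  refine ⟨μ univ + 2 ^ s * C * (1 - q)⁻¹, ?_, fun x => ?_⟩
  · have : (1 - q)⁻¹ ≠ ∞ := by simpa [tsub_eq_zero_iff_le] using hq1
    finiteness
  calc ∫⁻ y, edist x y ^ (-s) ∂μ ≤ ∫⁻ y, 1 + ∑' k : ℕ, (closedBall x ((2⁻¹ : ℝ) ^ k)).indicator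
        (fun _ => (2 : ℝ≥0∞) ^ s * ((2 : ℝ≥0∞) ^ s) ^ k) y ∂μ :=
        lintegral_mono fun y => edist_rpow_neg_le_tsum x y hs
    _ = μ univ + ∑' k : ℕ, (2 : ℝ≥0∞) ^ s * ((2 : ℝ≥0∞) ^ s) ^ k * μ (closedBall x ((2⁻¹ : ℝ) ^ k)) := by
        rw [lintegral_add_left measurable_const, lintegral_one, lintegral_tsum]
        · simp only [lintegral_indicator isClosed_closedBall.measurableSet, setLIntegral_const]
        · exact fun k => (measurable_const.indicator isClosed_closedBall.measurableSet).aemeasurable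
    _ ≤ μ univ + ∑' k : ℕ, 2 ^ s * C * q ^ k := by
        refine add_le_add le_rfl (ENNReal.tsum_le_tsum fun k => ?_)
        calc (2 : ℝ≥0∞) ^ s * ((2 : ℝ≥0∞) ^ s) ^ k * μ (closedBall x ((2⁻¹ : ℝ) ^ k))
            ≤ 2 ^ s * ((2 : ℝ≥0∞) ^ s) ^ k * (C * ENNReal.ofReal ((2⁻¹ : ℝ) ^ k) ^ t) := by
              gcongr; exact h x _ (by positivity)
          _ = 2 ^ s * C * q ^ k := by
            have : ENNReal.ofReal ((2⁻¹ : ℝ) ^ k) ^ t = ((2⁻¹ : ℝ≥0∞) ^ t) ^ k := by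
              rw [ENNReal.ofReal_pow (by norm_num), ENNReal.ofReal_inv_of_pos (by norm_num),
                ← ENNReal.rpow_natCast, ← ENNReal.rpow_natCast, ← ENNReal.rpow_mul,
                ← ENNReal.rpow_mul, mul_comm]
              simp
            rw [this, hq, mul_pow]; ring
    _ = _ := by rw [ENNReal.tsum_mul_left, ENNReal.tsum_geometric]

theorem measure_le_mul_hausdorffMeasure {E : Set X} (hE : MeasurableSet E) {t : ℝ}
    {C : ℝ≥0∞} (hC : C ≠ ∞)
    (h : ∀ x ∈ E, ∀ r : ℝ, 0 < r → μ (closedBall x r) ≤ C * ENNReal.ofReal r ^ t) :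
    μ E ≤ (C + 1) * μH[t] E := by
  have hC0 : C + 1 ≠ 0 := by simp
  have hC1 : C + 1 ≠ ∞ := by simp [hC]
  have key : (C + 1)⁻¹ • μ.restrict E ≤ μH[t] := by
    refine Measure.le_hausdorffMeasure t _ 1 one_pos fun s hs => ?_
    rw [Measure.smul_apply, smul_eq_mul, ENNReal.inv_mul_le_iff hC0 hC1, Measure.restrict_apply' hE]
    rcases eq_empty_or_nonempty (s ∩ E) with he | ⟨x, hxs, hxE⟩
    · simp [he]
    have hd : ediam s ≠ ∞ := ne_top_of_le_ne_top ENNReal.one_ne_top hs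
    have hb : ∀ r : ℝ, (ediam s).toReal < r → μ (s ∩ E) ≤ (C + 1) * ENNReal.ofReal r ^ t := by
      intro r hr
      refine (measure_mono ?_).trans ((h x hxE r (ENNReal.toReal_nonneg.trans_lt hr)).trans
        (by gcongr; exact le_self_add))
      intro y hy
      rw [mem_closedBall, dist_edist]
      exact (ENNReal.toReal_mono hd (edist_le_ediam_of_mem hy.1 hxs)).trans hr.le
    have hlim : Tendsto (fun r : ℝ => (C + 1) * ENNReal.ofReal r ^ t) (𝓝[>] (ediam s).toReal)
        (𝓝 ((C + 1) * ENNReal.ofReal (ediam s).toReal ^ t)) := by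
      refine tendsto_nhdsWithin_of_tendsto_nhds ?_
      refine ENNReal.Tendsto.const_mul ?_ (Or.inr hC1)
      exact ((ENNReal.continuous_rpow_const.comp ENNReal.continuous_ofReal).tendsto _)
    rw [ENNReal.ofReal_toReal hd] at hlim
    exact ge_of_tendsto hlim (eventually_nhdsWithin_of_forall hb)
  have := key E
  rwa [Measure.smul_apply, smul_eq_mul, ENNReal.inv_mul_le_iff hC0 hC1, Measure.restrict_apply_self]
    at this

/-- A set charged by a measure of finite `β`-energy has dimension at least `β`. -/
theorem le_dimH_of_energy_ne_top [SecondCountableTopology X] [SFinite μ] {β : ℝ} (hβ : 0 < β)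
    (hμ : ∫⁻ x, ∫⁻ y, edist x y ^ (-β) ∂μ ∂μ ≠ ∞) {E : Set X} (hE : MeasurableSet E)
    (h0 : μ E ≠ 0) : ENNReal.ofReal β ≤ dimH E := by
  have hmeas : Measurable fun p : X × X => edist p.1 p.2 ^ (-β) :=
    (measurable_fst.edist measurable_snd).pow_const _
  set φ : X → ℝ≥0∞ := fun x => ∫⁻ y, edist x y ^ (-β) ∂μ with hφ
  have hφm : Measurable φ := hmeas.lintegral_prod_right'
  have hfin : ∀ᵐ x ∂μ, φ x < ∞ := ae_lt_top hφm hμ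
  obtain ⟨M, hM⟩ : ∃ M : ℕ, μ (E ∩ {x | φ x ≤ M}) ≠ 0 := by
    by_contra! hcon
    refine h0 (measure_mono_null (t := (⋃ M : ℕ, E ∩ {x | φ x ≤ M}) ∪ {x | ¬ φ x < ∞}) ?_
      (measure_union_null (measure_iUnion_null hcon) (ae_iff.1 hfin)))
    intro x hx
    by_cases hx' : φ x < ∞
    · obtain ⟨M, hM⟩ := ENNReal.exists_nat_gt hx'.ne
      exact Or.inl (mem_iUnion.2 ⟨M, hx, hM.le⟩)
    · exact Or.inr hx'
  have hEm : MeasurableSet (E ∩ {x | φ x ≤ M}) := hE.inter (hφm measurableSet_Iic)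
  have key := measure_le_mul_hausdorffMeasure (μ := μ) hEm (C := M) (by simp) fun x hx r hr => by
    have h1 : ENNReal.ofReal r ^ (-β) * μ (closedBall x r) ≤ M := by
      refine le_trans ?_ hx.2
      rw [← setLIntegral_const]
      refine (setLIntegral_mono' isClosed_closedBall.measurableSet fun y hy => ?_).trans
        (setLIntegral_le_lintegral _ _)
      rw [ENNReal.rpow_neg, ENNReal.rpow_neg, ENNReal.inv_le_inv]
      refine ENNReal.rpow_le_rpow ?_ hβ.le
      rw [edist_comm, edist_dist]
      exact ENNReal.ofReal_le_ofReal hy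
    have hr0 : ENNReal.ofReal r ^ β ≠ 0 := by
      simp [ENNReal.rpow_eq_zero_iff, hr, hβ.not_gt]
    have hr1 : ENNReal.ofReal r ^ β ≠ ∞ := by finiteness
    rw [ENNReal.rpow_neg, ENNReal.inv_mul_le_iff hr0 hr1] at h1
    rwa [mul_comm]
  refine le_trans ?_ (dimH_mono (inter_subset_left (t := {x | φ x ≤ M})))
  refine le_dimH_of_hausdorffMeasure_ne_zero (d := β.toNNReal) fun h => ?_
  rw [Real.coe_toNNReal _ hβ.le] at h
  rw [h, mul_zero] at key
  exact hM (le_antisymm key zero_le)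

/-- A Frostman measure does not charge sets of smaller dimension. -/
theorem IsFrostman.measure_eq_zero {t : ℝ} (hμ : IsFrostman μ t) (ht : 0 < t) {E : Set X}
    (hE : MeasurableSet E) (hd : dimH E < ENNReal.ofReal t) : μ E = 0 := by
  obtain ⟨C, hC, h⟩ := hμ
  have h0 := hausdorffMeasure_of_dimH_lt (d := t.toNNReal) hd
  rw [Real.coe_toNNReal _ ht.le] at h0
  have := measure_le_mul_hausdorffMeasure hE hC fun x _ => h x
  rw [h0, mul_zero] at this
  exact le_antisymm this zero_le

end Potential

theorem isFrostman_volume_restrict {m : ℕ} (S : Set (Fin m → ℝ)) :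
    IsFrostman (volume.restrict S) (m : ℝ) := by
  refine ⟨2 ^ m, by finiteness, fun x r hr => (Measure.restrict_apply_le _ _).trans ?_⟩
  rw [Real.volume_pi_closedBall _ hr.le, ENNReal.ofReal_pow (by positivity), Fintype.card_fin,
    ENNReal.ofReal_mul (by norm_num), mul_pow, ENNReal.rpow_natCast]
  simp

theorem dimH_hyperplane_le (m : ℕ) (c : ℝ) : dimH {x : Fin (m + 1) → ℝ | x 0 = c} ≤ m := by
  have hL : LipschitzWith 1 (fun y : Fin m → ℝ => (Fin.cons c y : Fin (m + 1) → ℝ)) := by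
    refine LipschitzWith.of_edist_le fun y z => (edist_pi_le_iff).2 fun i => ?_
    refine Fin.cases (by simp) (fun i => ?_) i
    simpa using edist_le_pi_edist y z i
  have : {x : Fin (m + 1) → ℝ | x 0 = c} ⊆
      (fun y : Fin m → ℝ => (Fin.cons c y : Fin (m + 1) → ℝ)) '' univ := by
    intro x hx
    have hx : x 0 = c := hx
    exact ⟨Fin.tail x, trivial, by simp [← hx]⟩
  calc _ ≤ _ := dimH_mono this
    _ ≤ _ := hL.dimH_image_le univ
    _ = m := Real.dimH_univ_pi_fin m

/-! ### Projections along lines transversal to a hyperplane -/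

/-- The projection of `ℝᵐ⁺¹` onto `ℝᵐ` along the direction `(1, v)`. -/
def skewProj {m : ℕ} (v : Fin m → ℝ) (x : Fin (m + 1) → ℝ) : Fin m → ℝ := Fin.tail x - x 0 • v

section SkewProj

variable {m : ℕ}

theorem skewProj_sub (v : Fin m → ℝ) (x y : Fin (m + 1) → ℝ) :
    skewProj v (x - y) = skewProj v x - skewProj v y := by
  funext i
  simp [skewProj, Fin.tail]
  ring

theorem continuous_skewProj :
    Continuous fun p : (Fin m → ℝ) × (Fin (m + 1) → ℝ) => skewProj p.1 p.2 := by
  unfold skewProj Fin.tail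
  fun_prop

theorem norm_tail_le (z : Fin (m + 1) → ℝ) : ‖Fin.tail z‖ ≤ ‖z‖ :=
  (pi_norm_le_iff_of_nonneg (norm_nonneg _)).2 fun i => norm_le_pi_norm z i.succ

theorem norm_le_max_tail (z : Fin (m + 1) → ℝ) : ‖z‖ ≤ max |z 0| ‖Fin.tail z‖ := by
  refine (pi_norm_le_iff_of_nonneg (le_max_of_le_left (abs_nonneg _))).2 fun i => ?_
  refine Fin.cases (le_max_left _ _) (fun i => ?_) i
  exact (norm_le_pi_norm (Fin.tail z) i).trans (le_max_right _ _)

theorem abs_zero_le_norm (z : Fin (m + 1) → ℝ) : |z 0| ≤ ‖z‖ := norm_le_pi_norm z 0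

theorem norm_skewProj_le (v : Fin m → ℝ) (z : Fin (m + 1) → ℝ) :
    ‖skewProj v z‖ ≤ (1 + ‖v‖) * ‖z‖ := by
  calc ‖skewProj v z‖ ≤ ‖Fin.tail z‖ + ‖z 0 • v‖ := norm_sub_le _ _
    _ ≤ ‖z‖ + ‖z‖ * ‖v‖ := by
      rw [norm_smul]; gcongr
      · exact norm_tail_le z
      · exact abs_zero_le_norm z
    _ = _ := by ring

theorem norm_le_two_mul_norm_skewProj {R : ℝ} (hR : 1 ≤ R) {v : Fin m → ℝ} (hv : ‖v‖ ≤ R)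
    {z : Fin (m + 1) → ℝ} (hz : 2 * R * |z 0| ≤ ‖Fin.tail z‖) : ‖z‖ ≤ 2 * ‖skewProj v z‖ := by
  have h1 : ‖Fin.tail z‖ ≤ ‖skewProj v z‖ + |z 0| * ‖v‖ := by
    have : Fin.tail z = skewProj v z + z 0 • v := by simp [skewProj]
    calc ‖Fin.tail z‖ = ‖skewProj v z + z 0 • v‖ := by rw [← this]
      _ ≤ _ := (norm_add_le _ _).trans_eq (by rw [norm_smul, Real.norm_eq_abs])
  have h2 : |z 0| * ‖v‖ ≤ |z 0| * R := by gcongr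
  have h3 : |z 0| ≤ ‖Fin.tail z‖ := by nlinarith [abs_nonneg (z 0)]
  have h4 := norm_le_max_tail z
  rw [max_eq_right h3] at h4
  linarith

theorem norm_le_mul_abs_zero {R : ℝ} (hR : 1 ≤ R)
    {z : Fin (m + 1) → ℝ} (hz : ‖Fin.tail z‖ ≤ 2 * R * |z 0|) : ‖z‖ ≤ 2 * R * |z 0| :=
  (norm_le_max_tail z).trans (max_le (by nlinarith [abs_nonneg (z 0)]) hz)

theorem lintegral_skewProj_le {β : ℝ} (hβ : 0 < β) (hβm : β < m) {R : ℝ} (hR : 1 ≤ R) :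
    ∃ C : ℝ≥0∞, C ≠ ∞ ∧ ∀ x y : Fin (m + 1) → ℝ,
      ∫⁻ v in closedBall 0 R, edist (skewProj v x) (skewProj v y) ^ (-β) ≤
        C * edist x y ^ (-β) := by
  have : IsFiniteMeasure (volume.restrict (closedBall (0 : Fin m → ℝ) R)) :=
    ⟨by simpa using measure_closedBall_lt_top⟩
  obtain ⟨C, hC, hpot⟩ := (isFrostman_volume_restrict
    (closedBall (0 : Fin m → ℝ) R)).exists_lintegral_edist_le hβ hβm
  set V := volume (closedBall (0 : Fin m → ℝ) R) with hV
  have hVt : V ≠ ∞ := measure_closedBall_lt_top.ne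
  refine ⟨ENNReal.ofReal (2 * R) ^ β * (C + V), by finiteness, fun x y => ?_⟩
  have hsmall : ∀ {a b : ℝ≥0∞}, a ≤ ENNReal.ofReal (2 * R) * b →
      b ^ (-β) ≤ ENNReal.ofReal (2 * R) ^ β * a ^ (-β) := by
    intro a b hab
    have h0 : ENNReal.ofReal (2 * R) ≠ 0 := by simp; linarith
    have h0' : ENNReal.ofReal (2 * R) ^ β ≠ 0 := by
      simp [ENNReal.rpow_eq_zero_iff, hβ.not_gt]; intro h; linarith
    have h1 : ENNReal.ofReal (2 * R) ^ β ≠ ∞ := by finiteness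
    have : a ^ β ≤ ENNReal.ofReal (2 * R) ^ β * b ^ β := by
      rw [← ENNReal.mul_rpow_of_nonneg _ _ hβ.le]; exact ENNReal.rpow_le_rpow hab hβ.le
    rw [ENNReal.rpow_neg, ENNReal.rpow_neg, ← ENNReal.inv_mul_le_iff h0' h1,
      ← ENNReal.mul_inv (Or.inl h0') (Or.inl h1)]
    exact ENNReal.inv_le_inv.2 this
  have hnorm : ∀ v : Fin m → ℝ, edist (skewProj v x) (skewProj v y) =
      ENNReal.ofReal ‖skewProj v (x - y)‖ := fun v => by
    rw [edist_dist, dist_eq_norm, skewProj_sub]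
  have hxy : edist x y = ENNReal.ofReal ‖x - y‖ := by rw [edist_dist, dist_eq_norm]
  set z := x - y with hz
  rcases le_total (2 * R * |z 0|) ‖Fin.tail z‖ with hcase | hcase
  · calc _ ≤ ∫⁻ v in closedBall (0 : Fin m → ℝ) R,
          ENNReal.ofReal (2 * R) ^ β * edist x y ^ (-β) := by
          refine setLIntegral_mono' isClosed_closedBall.measurableSet fun v hv => hsmall ?_
          rw [hnorm, hxy, ← ENNReal.ofReal_mul (by linarith)]
          refine ENNReal.ofReal_le_ofReal ?_
          refine (norm_le_two_mul_norm_skewProj hR (by simpa using hv) hcase).trans ?_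
          gcongr
          linarith
      _ = ENNReal.ofReal (2 * R) ^ β * V * edist x y ^ (-β) := by rw [setLIntegral_const]; ring
      _ ≤ _ := by gcongr; exact le_add_self
  · have h1 := norm_le_mul_abs_zero hR hcase
    rcases eq_or_ne (z 0) 0 with h0 | h0
    · have : x = y := by
        rw [h0, abs_zero, mul_zero] at h1
        exact sub_eq_zero.1 (norm_le_zero_iff.1 h1)
      subst this
      have hpos : ENNReal.ofReal (2 * R) ^ β ≠ 0 := by
        simp [ENNReal.rpow_eq_zero_iff, hβ.not_gt]; intro h; linarith
      have hV0 : V ≠ 0 := (measure_closedBall_pos _ _ (by linarith)).ne'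
      simp only [edist_self, ENNReal.zero_rpow_of_neg (neg_lt_zero.2 hβ)]
      rw [ENNReal.mul_top (mul_ne_zero hpos (by simp [hV0]))]
      exact le_top
    have habs : ENNReal.ofReal |z 0| ≠ 0 := by simpa using h0
    have heq : ∀ v : Fin m → ℝ, edist (skewProj v x) (skewProj v y) =
        ENNReal.ofReal |z 0| * edist ((z 0)⁻¹ • Fin.tail z) v := fun v => by
      rw [hnorm, edist_dist, ← ENNReal.ofReal_mul (abs_nonneg _), dist_eq_norm,
        ← Real.norm_eq_abs, ← norm_smul, smul_sub, smul_inv_smul₀ h0]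
      rfl
    calc _ = ∫⁻ v in closedBall (0 : Fin m → ℝ) R,
          ENNReal.ofReal |z 0| ^ (-β) * edist ((z 0)⁻¹ • Fin.tail z) v ^ (-β) := by
          refine lintegral_congr fun v => ?_
          rw [heq, ENNReal.mul_rpow_of_ne_top (by simp) (edist_ne_top _ _)]
      _ = ENNReal.ofReal |z 0| ^ (-β) * ∫⁻ v in closedBall (0 : Fin m → ℝ) R,
          edist ((z 0)⁻¹ • Fin.tail z) v ^ (-β) := by
          rw [lintegral_const_mul]
          exact (measurable_const.edist measurable_id).pow_const _
      _ ≤ ENNReal.ofReal (2 * R) ^ β * edist x y ^ (-β) * (C + V) := by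
          gcongr
          · refine hsmall ?_
            rw [hxy, ← ENNReal.ofReal_mul (by linarith)]
            exact ENNReal.ofReal_le_ofReal h1
          · exact (hpot _).trans le_self_add
      _ = _ := by ring

end SkewProj

/-! ### Averaging kernels -/

section Kernels

variable {m : ℕ}

/-- The normalized indicator function of a cube centred at the origin. -/
noncomputable def cubeKernel (r : ℝ) (q : Fin m → ℝ) : ℝ :=
  (closedBall (0 : Fin m → ℝ) r).indicator (fun _ => ((2 * r) ^ m)⁻¹) q

/-- The difference of two consecutive dyadic cube kernels. -/
noncomputable def diffKernel (r : ℝ) (q : Fin m → ℝ) : ℝ := cubeKernel (r / 2) q - cubeKernel r q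

/-- A Lipschitz cut-off supported on a ball. -/
noncomputable def tent (R : ℝ) (v : Fin m → ℝ) : ℝ := max 0 (R - ‖v‖)

theorem measurable_cubeKernel (r : ℝ) : Measurable (cubeKernel (m := m) r) :=
  measurable_const.indicator isClosed_closedBall.measurableSet

theorem cubeKernel_nonneg {r : ℝ} (hr : 0 < r) (q : Fin m → ℝ) : 0 ≤ cubeKernel r q :=
  indicator_nonneg (fun _ _ => by positivity) q

theorem cubeKernel_le {r : ℝ} (hr : 0 < r) (q : Fin m → ℝ) : cubeKernel r q ≤ ((2 * r) ^ m)⁻¹ :=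
  indicator_le_self' (fun _ _ => by positivity) q

theorem cubeKernel_eq_zero {r : ℝ} {q : Fin m → ℝ} (h : r < ‖q‖) : cubeKernel r q = 0 :=
  indicator_of_notMem (by simpa using h) _

theorem cubeKernel_neg (r : ℝ) (q : Fin m → ℝ) : cubeKernel r (-q) = cubeKernel r q := by
  simp [cubeKernel, indicator]

theorem integrable_cubeKernel (r : ℝ) : Integrable (cubeKernel (m := m) r) :=
  (integrable_indicator_iff isClosed_closedBall.measurableSet).2
    (integrableOn_const measure_closedBall_lt_top.ne)

theorem integral_cubeKernel {r : ℝ} (hr : 0 < r) : ∫ q, cubeKernel (m := m) r q = 1 := by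
  simp only [cubeKernel]
  rw [integral_indicator_const _ isClosed_closedBall.measurableSet, measureReal_def,
    Real.volume_pi_closedBall _ hr.le, ENNReal.toReal_ofReal (by positivity), Fintype.card_fin,
    smul_eq_mul, mul_inv_cancel₀ (by positivity)]

theorem cubeKernel_sub_smul {r z : ℝ} (hz : z ≠ 0) (c v : Fin m → ℝ) :
    cubeKernel r (c - z • v) = (|z| ^ m)⁻¹ * cubeKernel (r / |z|) (z⁻¹ • c - v) := by
  have hz' : 0 < |z| := abs_pos.2 hz
  have h : ‖c - z • v‖ = |z| * ‖z⁻¹ • c - v‖ := by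
    rw [← Real.norm_eq_abs, ← norm_smul, smul_sub, smul_inv_smul₀ hz]
  have hiff : c - z • v ∈ closedBall (0 : Fin m → ℝ) r ↔
      z⁻¹ • c - v ∈ closedBall (0 : Fin m → ℝ) (r / |z|) := by
    rw [mem_closedBall_zero_iff, mem_closedBall_zero_iff, h, le_div_iff₀' hz']
  by_cases hc : c - z • v ∈ closedBall (0 : Fin m → ℝ) r
  · rw [cubeKernel, cubeKernel, indicator_of_mem hc, indicator_of_mem (hiff.1 hc), ← mul_inv,
      ← mul_pow]
    congr 2
    field_simp
  · rw [cubeKernel, cubeKernel, indicator_of_notMem hc, indicator_of_notMem (hiff.not.1 hc),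
      mul_zero]

theorem continuous_tent (R : ℝ) : Continuous (tent (m := m) R) := by
  unfold tent; fun_prop

theorem tent_nonneg (R : ℝ) (v : Fin m → ℝ) : 0 ≤ tent R v := le_max_left _ _

theorem tent_le {R : ℝ} (hR : 0 ≤ R) (v : Fin m → ℝ) : tent R v ≤ R :=
  max_le hR (by linarith [norm_nonneg v])

theorem tent_eq_zero {R : ℝ} {v : Fin m → ℝ} (h : v ∉ closedBall 0 R) : tent R v = 0 :=
  max_eq_left (by simp at h; linarith)

theorem abs_tent_sub_le (R : ℝ) (v a : Fin m → ℝ) : |tent R v - tent R a| ≤ ‖a - v‖ := by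
  calc |tent R v - tent R a| ≤ |(R - ‖v‖) - (R - ‖a‖)| := by
        simp only [tent, max_comm (0 : ℝ)]
        exact abs_max_sub_max_le_abs _ _ _
    _ = |‖a‖ - ‖v‖| := by congr 1; ring
    _ ≤ _ := abs_norm_sub_norm_le _ _

theorem integrable_tent (R : ℝ) : Integrable (tent (m := m) R) :=
  (continuous_tent R).integrable_of_hasCompactSupport
    (HasCompactSupport.intro (isCompact_closedBall 0 R) fun _ h => tent_eq_zero h)

theorem abs_integral_tent_mul_sub_le {R ρ : ℝ} (hR : 0 ≤ R) (hρ : 0 < ρ) (a : Fin m → ℝ) :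
    |(∫ v, tent R v * cubeKernel ρ (a - v)) - tent R a| ≤ ρ := by
  have hk : Integrable fun v => cubeKernel ρ (a - v) := (integrable_cubeKernel ρ).comp_sub_left a
  have h1 : ∫ v, cubeKernel ρ (a - v) = 1 := by
    rw [integral_sub_left_eq_self (cubeKernel ρ) volume a, integral_cubeKernel hρ]
  have hi : Integrable fun v => tent R v * cubeKernel ρ (a - v) :=
    hk.bdd_mul (continuous_tent R).aestronglyMeasurable (c := R) (Filter.Eventually.of_forall fun v => by
      rw [Real.norm_of_nonneg (tent_nonneg R v)]; exact tent_le hR v)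
  have h2 : (∫ v, tent R v * cubeKernel ρ (a - v)) - tent R a =
      ∫ v, (tent R v - tent R a) * cubeKernel ρ (a - v) := by
    simp only [sub_mul]
    rw [integral_sub hi (hk.const_mul _), integral_const_mul, h1, mul_one]
  rw [h2]
  calc _ ≤ ∫ v, ρ * cubeKernel ρ (a - v) := by
        rw [← Real.norm_eq_abs]
        refine norm_integral_le_of_norm_le (hk.const_mul ρ) (Filter.Eventually.of_forall fun v => ?_)
        rw [norm_mul, Real.norm_of_nonneg (cubeKernel_nonneg hρ _), Real.norm_eq_abs]
        rcases lt_or_ge ρ ‖a - v‖ with h | h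
        · simp [cubeKernel_eq_zero h]
        · exact mul_le_mul_of_nonneg_right ((abs_tent_sub_le R v a).trans h)
            (cubeKernel_nonneg hρ _)
    _ = ρ := by rw [integral_const_mul, h1, mul_one]

theorem abs_integral_tent_mul_cubeKernel_sub_le {R r z : ℝ} (hR : 0 ≤ R) (hr : 0 < r) (hz : z ≠ 0)
    (c : Fin m → ℝ) :
    |(∫ v, tent R v * cubeKernel r (c - z • v)) - (|z| ^ m)⁻¹ * tent R (z⁻¹ • c)| ≤
      (|z| ^ m)⁻¹ * (r / |z|) := by
  have hz' : 0 < |z| := abs_pos.2 hz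
  have : ∫ v, tent R v * cubeKernel r (c - z • v) =
      (|z| ^ m)⁻¹ * ∫ v, tent R v * cubeKernel (r / |z|) (z⁻¹ • c - v) := by
    rw [← integral_const_mul]
    refine integral_congr_ae (Filter.Eventually.of_forall fun v => ?_)
    simp only [cubeKernel_sub_smul hz]
    ring
  rw [this, ← mul_sub, abs_mul, abs_of_nonneg (by positivity : 0 ≤ (|z| ^ m)⁻¹)]
  gcongr
  exact abs_integral_tent_mul_sub_le hR (by positivity) _

/-- The correlation of two kernels. -/
noncomputable def correlation (f g : (Fin m → ℝ) → ℝ) (a : Fin m → ℝ) : ℝ := ∫ q, f q * g (q + a)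

/-- The correlation of two kernels, averaged over the projections of `z`. -/
noncomputable def avgCorrelation (R : ℝ) (f g : (Fin m → ℝ) → ℝ) (z : Fin (m + 1) → ℝ) : ℝ :=
  ∫ v, tent R v * correlation f g (skewProj v z)

theorem avgCorrelation_eq {R : ℝ} {f g : (Fin m → ℝ) → ℝ} (hf : Integrable f) (hg : Measurable g)
    {c : ℝ} (hgc : ∀ q, |g q| ≤ c) (z : Fin (m + 1) → ℝ) :
    avgCorrelation R f g z = ∫ q, f q * ∫ v, tent R v * g (q + Fin.tail z - z 0 • v) := by
  have hIntegral : Integrable (fun p : (Fin m → ℝ) × (Fin m → ℝ) =>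
      tent R p.1 * f p.2 * g (p.2 + skewProj p.1 z)) (volume.prod volume) := by
    refine ((integrable_tent R).mul_prod hf).mul_bdd (c := c) ?_
      (Filter.Eventually.of_forall fun p => hgc _)
    refine (hg.comp ?_).aestronglyMeasurable
    have : Continuous fun p : (Fin m → ℝ) × (Fin m → ℝ) => skewProj p.1 z :=
      continuous_skewProj.comp (continuous_fst.prodMk continuous_const)
    exact (continuous_snd.add this).measurable
  calc avgCorrelation R f g z = ∫ v, ∫ q, tent R v * f q * g (q + skewProj v z) := by
        simp only [avgCorrelation, correlation, ← integral_const_mul, mul_assoc]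
    _ = ∫ q, ∫ v, tent R v * f q * g (q + skewProj v z) := integral_integral_swap hIntegral
    _ = _ := by
        refine integral_congr_ae (Filter.Eventually.of_forall fun q => ?_)
        simp only [← integral_const_mul]
        refine integral_congr_ae (Filter.Eventually.of_forall fun v => ?_)
        simp only [skewProj, add_sub_assoc]
        ring

theorem correlation_cubeKernel_comm (r ρ : ℝ) (a : Fin m → ℝ) :
    correlation (cubeKernel r) (cubeKernel ρ) a = correlation (cubeKernel ρ) (cubeKernel r) a := by
  unfold correlation
  rw [← integral_sub_left_eq_self _ volume (-a)]
  refine integral_congr_ae (Filter.Eventually.of_forall fun q => ?_)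
  simp only
  rw [show -a - q = -(q + a) by abel, cubeKernel_neg, show -(q + a) + a = -q by abel,
    cubeKernel_neg, mul_comm]

theorem measurable_diffKernel (r : ℝ) : Measurable (diffKernel (m := m) r) :=
  (measurable_cubeKernel _).sub (measurable_cubeKernel _)

theorem integrable_diffKernel (r : ℝ) : Integrable (diffKernel (m := m) r) :=
  (integrable_cubeKernel _).sub (integrable_cubeKernel _)

theorem abs_diffKernel_le {r : ℝ} (hr : 0 < r) (q : Fin m → ℝ) : |diffKernel r q| ≤ (r ^ m)⁻¹ := by
  have h1 := cubeKernel_nonneg (half_pos hr) q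
  have h2 := cubeKernel_nonneg hr q
  have h3 := cubeKernel_le (half_pos hr) q
  have h4 := cubeKernel_le hr q
  have h5 : ((2 * r) ^ m)⁻¹ ≤ (r ^ m)⁻¹ := by gcongr; linarith
  rw [mul_div_cancel₀ r (two_ne_zero' ℝ)] at h3
  unfold diffKernel
  exact abs_le.2 ⟨by linarith, by linarith⟩

theorem integral_abs_diffKernel_le {r : ℝ} (hr : 0 < r) :
    ∫ q, |diffKernel (m := m) r q| ≤ 2 := by
  calc ∫ q, |diffKernel (m := m) r q| ≤ ∫ q, (cubeKernel (m := m) (r / 2) q + cubeKernel r q) := by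
        refine integral_mono (integrable_diffKernel r).abs
          ((integrable_cubeKernel _).add (integrable_cubeKernel _)) fun q => ?_
        have h1 := cubeKernel_nonneg (half_pos hr) q
        have h2 := cubeKernel_nonneg hr q
        exact abs_le.2 ⟨by simp only [diffKernel]; linarith, by simp only [diffKernel]; linarith⟩
    _ = 2 := by
        rw [integral_add (integrable_cubeKernel _) (integrable_cubeKernel _),
          integral_cubeKernel (half_pos hr), integral_cubeKernel hr]
        norm_num

theorem diffKernel_eq_zero {r : ℝ} (hr : 0 < r) {q : Fin m → ℝ} (h : r < ‖q‖) :
    diffKernel r q = 0 := by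
  rw [diffKernel, cubeKernel_eq_zero h, cubeKernel_eq_zero (by linarith), sub_zero]

theorem abs_integral_mul_le {f h : (Fin m → ℝ) → ℝ} (hf : Integrable f) {c : ℝ}
    (hc : ∀ q, |h q| ≤ c) : |∫ q, f q * h q| ≤ (∫ q, |f q|) * c := by
  rw [← integral_mul_const, ← Real.norm_eq_abs]
  refine norm_integral_le_of_norm_le (hf.abs.mul_const c) (Filter.Eventually.of_forall fun q => ?_)
  rw [norm_mul]
  exact mul_le_mul_of_nonneg_left (hc q) (abs_nonneg _)

theorem abs_avgCorrelation_le (R : ℝ) {r : ℝ} (hr : 0 < r) (z : Fin (m + 1) → ℝ) :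
    |avgCorrelation R (diffKernel r) (diffKernel r) z| ≤ (∫ v, tent (m := m) R v) * 2 * (r ^ m)⁻¹ := by
  have h := abs_integral_mul_le (integrable_tent R)
    (h := fun v => correlation (diffKernel r) (diffKernel r) (skewProj v z)) (c := 2 * (r ^ m)⁻¹)
    fun v => (abs_integral_mul_le (integrable_diffKernel r) fun q => abs_diffKernel_le hr _).trans
      (by gcongr; exact integral_abs_diffKernel_le hr)
  simp only [abs_of_nonneg (tent_nonneg R _)] at h
  rwa [mul_assoc]

theorem abs_avgCorrelation_le_of_ne_zero {R : ℝ} (hR : 0 ≤ R) {r : ℝ} (hr : 0 < r)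
    {z : Fin (m + 1) → ℝ} (hz : z 0 ≠ 0) :
    |avgCorrelation R (diffKernel r) (diffKernel r) z| ≤ 4 * r * (|z 0| ^ (m + 1))⁻¹ := by
  have hz' : 0 < |z 0| := abs_pos.2 hz
  rw [avgCorrelation_eq (integrable_diffKernel r) (measurable_diffKernel r) (abs_diffKernel_le hr)]
  have hinner : ∀ q, |∫ v, tent R v * diffKernel r (q + Fin.tail z - z 0 • v)| ≤
      2 * ((|z 0| ^ m)⁻¹ * (r / |z 0|)) := fun q => by
    have hi : ∀ ρ : ℝ, 0 < ρ → Integrable fun v => tent R v * cubeKernel ρ (q + Fin.tail z - z 0 • v) :=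
      fun ρ hρ => (integrable_tent R).mul_bdd (c := ((2 * ρ) ^ m)⁻¹)
        ((measurable_cubeKernel ρ).comp (by fun_prop)).aestronglyMeasurable
        (Filter.Eventually.of_forall fun v => by
          rw [Real.norm_of_nonneg (cubeKernel_nonneg hρ _)]; exact cubeKernel_le hρ _)
    have h1 := abs_integral_tent_mul_cubeKernel_sub_le hR (half_pos hr) hz (q + Fin.tail z)
    have h2 := abs_integral_tent_mul_cubeKernel_sub_le hR hr hz (q + Fin.tail z)
    simp only [diffKernel, mul_sub]
    rw [integral_sub (hi _ (half_pos hr)) (hi _ hr)]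
    have h3 : (|z 0| ^ m)⁻¹ * (r / 2 / |z 0|) ≤ (|z 0| ^ m)⁻¹ * (r / |z 0|) := by gcongr; linarith
    rw [abs_le] at h1 h2 ⊢
    constructor <;> linarith [h1.1, h1.2, h2.1, h2.2]
  refine (abs_integral_mul_le (integrable_diffKernel r) hinner).trans ?_
  calc _ ≤ 2 * (2 * ((|z 0| ^ m)⁻¹ * (r / |z 0|))) := by
        gcongr; exact integral_abs_diffKernel_le hr
    _ = _ := by rw [pow_succ, mul_inv]; ring

theorem avgCorrelation_eq_zero {R : ℝ} (hR : 1 ≤ R) {r : ℝ} (hr : 0 < r) {z : Fin (m + 1) → ℝ}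
    (hz : 2 * R * |z 0| ≤ ‖Fin.tail z‖) (hzr : 4 * r < ‖z‖) :
    avgCorrelation R (diffKernel r) (diffKernel r) z = 0 := by
  refine integral_eq_zero_of_ae (Filter.Eventually.of_forall fun v => ?_)
  simp only [Pi.zero_apply, mul_eq_zero]
  by_cases hv : v ∈ closedBall 0 R
  · refine Or.inr (integral_eq_zero_of_ae (Filter.Eventually.of_forall fun q => ?_))
    have h1 := norm_le_two_mul_norm_skewProj hR (by simpa using hv) hz
    simp only [Pi.zero_apply, mul_eq_zero]
    rcases lt_or_ge r ‖q‖ with hq | hq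
    · exact Or.inl (diffKernel_eq_zero hr hq)
    · refine Or.inr (diffKernel_eq_zero hr ?_)
      have := norm_sub_le (q + skewProj v z) q
      rw [add_sub_cancel_left] at this
      linarith
  · exact Or.inl (tent_eq_zero hv)

/-- The averaged autocorrelation of a difference kernel decays in both the scale and the distance. -/
theorem exists_abs_avgCorrelation_le {R : ℝ} (hR : 1 ≤ R) {s : ℝ} (hs : m < s) (hs' : s ≤ m + 1) :
    ∃ C : ℝ, 0 ≤ C ∧ ∀ r : ℝ, 0 < r → ∀ z : Fin (m + 1) → ℝ, z ≠ 0 →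
      |avgCorrelation R (diffKernel r) (diffKernel r) z| ≤ C * r ^ (s - m) * ‖z‖ ^ (-s) := by
  have hs0 : 0 < s := lt_of_le_of_lt (Nat.cast_nonneg m) hs
  set I := ∫ v, tent (m := m) R v with hI
  have hI0 : 0 ≤ I := integral_nonneg fun v => tent_nonneg R v
  refine ⟨I * 2 * 4 ^ s + 4 * (2 * R) ^ (m + 1), by positivity, fun r hr z hz => ?_⟩
  have hzn : 0 < ‖z‖ := norm_pos_iff.2 hz
  have hsmall : ‖z‖ ≤ 4 * r →
      |avgCorrelation R (diffKernel r) (diffKernel r) z| ≤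
        I * 2 * 4 ^ s * r ^ (s - m) * ‖z‖ ^ (-s) := fun h => by
    refine (abs_avgCorrelation_le R hr z).trans ?_
    have h1 : (4 * r) ^ (-s) ≤ ‖z‖ ^ (-s) :=
      Real.rpow_le_rpow_of_nonpos hzn h (by linarith)
    have h2 : (r ^ m)⁻¹ = 4 ^ s * r ^ (s - m) * (4 * r) ^ (-s) := by
      rw [Real.mul_rpow (by norm_num) hr.le, Real.rpow_sub hr, Real.rpow_neg (by norm_num),
        Real.rpow_neg hr.le, Real.rpow_natCast]
      have : (0 : ℝ) < r ^ s := by positivity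
      have : (0 : ℝ) < 4 ^ s := by positivity
      field_simp
    calc I * 2 * (r ^ m)⁻¹ = I * 2 * (4 ^ s * r ^ (s - m) * (4 * r) ^ (-s)) := by rw [h2]
      _ ≤ I * 2 * (4 ^ s * r ^ (s - m) * ‖z‖ ^ (-s)) := by gcongr
      _ = _ := by ring
  rcases le_or_gt ‖z‖ (4 * r) with hzr | hzr
  · refine (hsmall hzr).trans ?_
    gcongr
    exact le_add_of_nonneg_right (by positivity)
  rcases le_total (2 * R * |z 0|) ‖Fin.tail z‖ with hcase | hcase
  · rw [avgCorrelation_eq_zero hR hr hcase hzr, abs_zero]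
    positivity
  have h1 := norm_le_mul_abs_zero hR hcase
  have hz0 : 0 < |z 0| := by
    by_contra hcon
    have : |z 0| = 0 := le_antisymm (not_lt.1 hcon) (abs_nonneg _)
    rw [this, mul_zero] at h1
    linarith
  refine (abs_avgCorrelation_le_of_ne_zero (by linarith) hr (abs_pos.1 hz0)).trans ?_
  have h2 : (|z 0| ^ (m + 1))⁻¹ ≤ (2 * R) ^ (m + 1) * (‖z‖ ^ (m + 1))⁻¹ := by
    rw [inv_le_iff_one_le_mul₀ (by positivity)]
    have : ‖z‖ ^ (m + 1) ≤ (2 * R) ^ (m + 1) * |z 0| ^ (m + 1) := by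
      rw [← mul_pow]; gcongr
    calc (1 : ℝ) = ‖z‖ ^ (m + 1) * (‖z‖ ^ (m + 1))⁻¹ := by field_simp
      _ ≤ (2 * R) ^ (m + 1) * |z 0| ^ (m + 1) * (‖z‖ ^ (m + 1))⁻¹ := by gcongr
      _ = _ := by ring
  have h3 : r * (‖z‖ ^ (m + 1))⁻¹ ≤ r ^ (s - m) * ‖z‖ ^ (-s) := by
    have e1 : r = r ^ (s - m) * r ^ (m + 1 - s) := by
      rw [← Real.rpow_add hr]; simp
    have e2 : ‖z‖ ^ (m + 1) = ‖z‖ ^ s * ‖z‖ ^ (m + 1 - s) := by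
      rw [← Real.rpow_add hzn, ← Real.rpow_natCast]; congr 1; push_cast; ring
    have e3 : r ^ (m + 1 - s) ≤ ‖z‖ ^ (m + 1 - s) :=
      Real.rpow_le_rpow hr.le (by linarith) (by linarith)
    calc r * (‖z‖ ^ (m + 1))⁻¹
        = r ^ (s - m) * r ^ (m + 1 - s) * (‖z‖ ^ s * ‖z‖ ^ (m + 1 - s))⁻¹ := by rw [← e1, ← e2]
      _ ≤ r ^ (s - m) * ‖z‖ ^ (m + 1 - s) * (‖z‖ ^ s * ‖z‖ ^ (m + 1 - s))⁻¹ := by gcongr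
      _ = r ^ (s - m) * ‖z‖ ^ (-s) := by
        rw [Real.rpow_neg hzn.le]
        have : 0 < ‖z‖ ^ s := by positivity
        have : 0 < ‖z‖ ^ (m + 1 - s) := by positivity
        field_simp
  calc 4 * r * (|z 0| ^ (m + 1))⁻¹ ≤ 4 * r * ((2 * R) ^ (m + 1) * (‖z‖ ^ (m + 1))⁻¹) := by gcongr
    _ = 4 * (2 * R) ^ (m + 1) * (r * (‖z‖ ^ (m + 1))⁻¹) := by ring
    _ ≤ 4 * (2 * R) ^ (m + 1) * (r ^ (s - m) * ‖z‖ ^ (-s)) := by gcongr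
    _ ≤ (I * 2 * 4 ^ s + 4 * (2 * R) ^ (m + 1)) * (r ^ (s - m) * ‖z‖ ^ (-s)) := by
      gcongr; exact le_add_of_nonneg_left (by positivity)
    _ = _ := by ring

theorem le_avgCorrelation_cubeKernel {R r : ℝ} (hr : 0 < r) {z : Fin (m + 1) → ℝ}
    (hz : z 0 ≠ 0) (hR : ‖Fin.tail z‖ + 2 * r ≤ (R - 1) * |z 0|) :
    (|z 0| ^ m)⁻¹ ≤ avgCorrelation R (cubeKernel r) (cubeKernel r) z := by
  have hz' : 0 < |z 0| := abs_pos.2 hz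
  have habs : ∀ q : Fin m → ℝ, |cubeKernel r q| ≤ ((2 * r) ^ m)⁻¹ := fun q => by
    rw [abs_of_nonneg (cubeKernel_nonneg hr q)]; exact cubeKernel_le hr q
  have hR0 : 0 ≤ R := by
    by_contra hcon
    nlinarith [norm_nonneg (Fin.tail z)]
  rw [avgCorrelation_eq (integrable_cubeKernel r) (measurable_cubeKernel r) habs]
  set h : (Fin m → ℝ) → ℝ := fun q => ∫ v, tent R v * cubeKernel r (q + Fin.tail z - z 0 • v) with hh
  have hlow : ∀ q, ‖q‖ ≤ r → (|z 0| ^ m)⁻¹ ≤ h q := fun q hq => by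
    set a := (z 0)⁻¹ • (q + Fin.tail z) with ha
    have hρ : 0 < r / |z 0| := by positivity
    have hk : Integrable fun v => cubeKernel (r / |z 0|) (a - v) :=
      (integrable_cubeKernel _).comp_sub_left a
    have h1 : ∫ v, cubeKernel (r / |z 0|) (a - v) = 1 := by
      rw [integral_sub_left_eq_self (cubeKernel _) volume a, integral_cubeKernel hρ]
    have hi : Integrable fun v => tent R v * cubeKernel (r / |z 0|) (a - v) :=
      hk.bdd_mul (continuous_tent R).aestronglyMeasurable (c := R)
        (Filter.Eventually.of_forall fun v => by
          rw [Real.norm_of_nonneg (tent_nonneg R v)]; exact tent_le hR0 v)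
    have heq : h q = (|z 0| ^ m)⁻¹ * ∫ v, tent R v * cubeKernel (r / |z 0|) (a - v) := by
      rw [hh, ← integral_const_mul]
      refine integral_congr_ae (Filter.Eventually.of_forall fun v => ?_)
      simp only [cubeKernel_sub_smul hz]
      ring
    rw [heq]
    refine le_mul_of_one_le_right (by positivity) ?_
    rw [← h1]
    refine integral_mono hk hi fun v => ?_
    simp only
    rcases lt_or_ge (r / |z 0|) ‖a - v‖ with hv | hv
    · simp [cubeKernel_eq_zero hv]
    · refine le_mul_of_one_le_left (cubeKernel_nonneg hρ _) ?_
      refine le_max_of_le_right ?_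
      have h2 : ‖v‖ ≤ ‖a‖ + ‖a - v‖ := by
        have := norm_sub_le a (a - v)
        rwa [sub_sub_cancel] at this
      have h3 : ‖a‖ ≤ (r + ‖Fin.tail z‖) / |z 0| := by
        rw [ha, norm_smul, norm_inv, Real.norm_eq_abs, div_eq_inv_mul]
        gcongr
        exact (norm_add_le _ _).trans (by gcongr)
      have h4 : (r + ‖Fin.tail z‖) / |z 0| + r / |z 0| ≤ R - 1 := by
        rw [← add_div, div_le_iff₀ hz']; linarith
      linarith
  have hbd : ∀ q, |h q| ≤ (∫ v, |tent R v|) * ((2 * r) ^ m)⁻¹ := fun q =>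
    abs_integral_mul_le (integrable_tent R) fun v => habs _
  have hmeas : AEStronglyMeasurable h := by
    refine StronglyMeasurable.aestronglyMeasurable (StronglyMeasurable.integral_prod_right (f := fun q v =>
      tent R v * cubeKernel r (q + Fin.tail z - z 0 • v)) ?_)
    refine Measurable.stronglyMeasurable ?_
    exact ((continuous_tent R).measurable.comp measurable_snd).mul
      ((measurable_cubeKernel r).comp (by fun_prop))
  calc (|z 0| ^ m)⁻¹ = ∫ q : Fin m → ℝ, cubeKernel r q * (|z 0| ^ m)⁻¹ := by
        rw [integral_mul_const, integral_cubeKernel hr, one_mul]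
    _ ≤ ∫ q, cubeKernel r q * h q := by
        refine integral_mono ((integrable_cubeKernel r).mul_const _)
          ((integrable_cubeKernel r).mul_bdd hmeas (Filter.Eventually.of_forall hbd)) fun q => ?_
        simp only
        rcases lt_or_ge r ‖q‖ with hq | hq
        · simp [cubeKernel_eq_zero hq]
        · exact mul_le_mul_of_nonneg_left (hlow q hq) (cubeKernel_nonneg hr q)

end Kernels

/-! ### Mollified projections of measures -/

section Smoothing

open Filter

theorem integrable_of_abs_le {Ω : Type*} [MeasurableSpace Ω] {κ : Measure Ω} [IsFiniteMeasure κ]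
    {f : Ω → ℝ} (hf : Measurable f) {c : ℝ} (hc : ∀ x, |f x| ≤ c) : Integrable f κ :=
  Integrable.of_bound hf.aestronglyMeasurable c (Eventually.of_forall hc)

theorem integral_mul_integral_mul_integral {X₁ X₂ Ω : Type*} [MeasurableSpace X₁]
    [MeasurableSpace X₂] [MeasurableSpace Ω] (μ : Measure X₁) (ν : Measure X₂) (κ : Measure Ω)
    [IsFiniteMeasure μ] [IsFiniteMeasure ν] [IsFiniteMeasure κ] {a : Ω → ℝ} {p : X₁ → Ω → ℝ}
    {q : X₂ → Ω → ℝ} (ha : Measurable a) (hp : Measurable (Function.uncurry p))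
    (hq : Measurable (Function.uncurry q)) {A P Q : ℝ} (hA : ∀ ω, |a ω| ≤ A)
    (hP : ∀ x ω, |p x ω| ≤ P) (hQ : ∀ y ω, |q y ω| ≤ Q) :
    ∫ ω, a ω * (∫ x, p x ω ∂μ) * (∫ y, q y ω ∂ν) ∂κ =
      ∫ z : X₁ × X₂, ∫ ω, a ω * p z.1 ω * q z.2 ω ∂κ ∂(μ.prod ν) := by
  have hIntegral : Integrable (fun t : Ω × (X₁ × X₂) => a t.1 * p t.2.1 t.1 * q t.2.2 t.1)
      (κ.prod (μ.prod ν)) := by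
    refine integrable_of_abs_le (c := A * P * Q) ?_ fun t => ?_
    · have h1 : Measurable fun t : Ω × (X₁ × X₂) => p t.2.1 t.1 :=
        hp.comp ((measurable_fst.comp measurable_snd).prodMk measurable_fst)
      have h2 : Measurable fun t : Ω × (X₁ × X₂) => q t.2.2 t.1 :=
        hq.comp ((measurable_snd.comp measurable_snd).prodMk measurable_fst)
      exact ((ha.comp measurable_fst).mul h1).mul h2
    · rw [abs_mul, abs_mul]
      have := hA t.1
      have := hP t.2.1 t.1
      have := (abs_nonneg _).trans this
      have := (abs_nonneg _).trans (hA t.1)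
      gcongr
      exact hQ _ _
  rw [← integral_integral_swap hIntegral]
  refine integral_congr_ae (Eventually.of_forall fun ω => ?_)
  simp only [mul_assoc]
  rw [integral_const_mul, ← integral_prod_mul]

variable {m : ℕ}

/-- The product of Lebesgue measures on two cubes. -/
noncomputable def cubeMeasure (m : ℕ) (R D : ℝ) : Measure ((Fin m → ℝ) × (Fin m → ℝ)) :=
  (volume.restrict (closedBall 0 R)).prod (volume.restrict (closedBall 0 D))

instance (R : ℝ) : IsFiniteMeasure (volume.restrict (closedBall (0 : Fin m → ℝ) R)) :=
  ⟨by simpa using measure_closedBall_lt_top⟩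

instance (R D : ℝ) : IsFiniteMeasure (cubeMeasure m R D) := by
  unfold cubeMeasure; infer_instance

/-- The projection in direction `p.1` of the section of `H`, convolved with `f`, at `p.2`. -/
noncomputable def smooth (f : (Fin m → ℝ) → ℝ) (μ : Measure (Fin (m + 1) → ℝ))
    (H : Set ((Fin (m + 1) → ℝ) × (Fin m → ℝ))) (p : (Fin m → ℝ) × (Fin m → ℝ)) : ℝ :=
  ∫ x, H.indicator 1 (x, p.1) * f (p.2 - skewProj p.1 x) ∂μ

/-- The average over directions of the inner product of two smoothed projections. -/
noncomputable def pairing (R D : ℝ) (f g : (Fin m → ℝ) → ℝ) (μ ν : Measure (Fin (m + 1) → ℝ))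
    (H H' : Set ((Fin (m + 1) → ℝ) × (Fin m → ℝ))) : ℝ :=
  ∫ p, tent R p.1 * smooth f μ H p * smooth g ν H' p ∂(cubeMeasure m R D)

variable {f g : (Fin m → ℝ) → ℝ} {μ ν : Measure (Fin (m + 1) → ℝ)} {R S D : ℝ}
  {H H' : Set ((Fin (m + 1) → ℝ) × (Fin m → ℝ))}

theorem abs_indicator_one_mul_le {α : Type*} (s : Set α) (a : α) {b c : ℝ} (h : |b| ≤ c) :
    |s.indicator 1 a * b| ≤ c := by
  by_cases ha : a ∈ s
  · simpa [ha] using h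
  · simpa [ha] using (abs_nonneg b).trans h

theorem measurable_smooth_integrand (hf : Measurable f) (hH : MeasurableSet H) :
    Measurable (Function.uncurry fun (x : Fin (m + 1) → ℝ) (p : (Fin m → ℝ) × (Fin m → ℝ)) =>
      H.indicator (1 : (Fin (m + 1) → ℝ) × (Fin m → ℝ) → ℝ) (x, p.1) * f (p.2 - skewProj p.1 x)) := by
  have h1 : Measurable fun t : (Fin (m + 1) → ℝ) × ((Fin m → ℝ) × (Fin m → ℝ)) =>
      H.indicator (1 : (Fin (m + 1) → ℝ) × (Fin m → ℝ) → ℝ) (t.1, t.2.1) :=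
    (measurable_one.indicator hH).comp (measurable_fst.prodMk (measurable_fst.comp measurable_snd))
  have h2 : Measurable fun t : (Fin (m + 1) → ℝ) × ((Fin m → ℝ) × (Fin m → ℝ)) =>
      t.2.2 - skewProj t.2.1 t.1 := by
    refine (measurable_snd.comp measurable_snd).sub ?_
    exact continuous_skewProj.measurable.comp
      ((measurable_fst.comp measurable_snd).prodMk measurable_fst)
  exact h1.mul (hf.comp h2)

theorem integrable_smooth_integrand [IsFiniteMeasure μ] (hf : Measurable f) {c : ℝ}
    (hc : ∀ q, |f q| ≤ c) (hH : MeasurableSet H) (p : (Fin m → ℝ) × (Fin m → ℝ)) :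
    Integrable (fun x => H.indicator 1 (x, p.1) * f (p.2 - skewProj p.1 x)) μ :=
  integrable_of_abs_le ((measurable_smooth_integrand hf hH).comp
    (measurable_id.prodMk measurable_const)) fun _ => abs_indicator_one_mul_le _ _ (hc _)

theorem measurable_smooth [IsFiniteMeasure μ] (hf : Measurable f) (hH : MeasurableSet H) :
    Measurable (smooth f μ H) := by
  have := (measurable_smooth_integrand hf hH).comp measurable_swap
  exact (StronglyMeasurable.integral_prod_right' (ν := μ) this.stronglyMeasurable).measurable

theorem abs_smooth_le [IsProbabilityMeasure μ] {c : ℝ} (hc : ∀ q, |f q| ≤ c)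
    (p : (Fin m → ℝ) × (Fin m → ℝ)) : |smooth f μ H p| ≤ c := by
  have := norm_integral_le_of_norm_le_const (μ := μ) (C := c)
    (f := fun x => H.indicator 1 (x, p.1) * f (p.2 - skewProj p.1 x))
    (Eventually.of_forall fun x => abs_indicator_one_mul_le _ _ (hc _))
  simpa [smooth] using this

theorem smooth_sub [IsFiniteMeasure μ] (hf : Measurable f) (hg : Measurable g) {c d : ℝ}
    (hc : ∀ q, |f q| ≤ c) (hd : ∀ q, |g q| ≤ d) (hH : MeasurableSet H)
    (p : (Fin m → ℝ) × (Fin m → ℝ)) :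
    smooth (fun q => f q - g q) μ H p = smooth f μ H p - smooth g μ H p := by
  simp only [smooth, mul_sub]
  exact integral_sub (integrable_smooth_integrand hf hc hH p)
    (integrable_smooth_integrand hg hd hH p)

theorem setIntegral_mul_eq_correlation (hf0 : ∀ q, 1 < ‖q‖ → f q = 0) {v : Fin m → ℝ}
    (hv : ‖v‖ ≤ R) {x y : Fin (m + 1) → ℝ} (hx : ‖x‖ ≤ S) (hD : (1 + R) * S + 1 ≤ D) :
    ∫ u in closedBall 0 D, f (u - skewProj v x) * g (u - skewProj v y) =
      correlation f g (skewProj v (x - y)) := by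
  rw [setIntegral_eq_integral_of_forall_compl_eq_zero, correlation,
    ← integral_add_right_eq_self _ (skewProj v x)]
  · refine integral_congr_ae (Eventually.of_forall fun q => ?_)
    simp only [skewProj_sub]
    congr 2 <;> abel
  · intro u hu
    rw [hf0, zero_mul]
    have h1 := norm_skewProj_le v x
    have h2 : (1 + ‖v‖) * ‖x‖ ≤ (1 + R) * S := by
      have := norm_nonneg v
      have : 0 ≤ 1 + R := by linarith
      gcongr
    have h3 : D < ‖u‖ := by simpa using hu
    have h4 := norm_sub_norm_le u (skewProj v x)
    linarith

theorem pairing_eq [IsFiniteMeasure μ] [IsFiniteMeasure ν] (hR : 0 ≤ R) (hf : Measurable f)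
    (hg : Measurable g) {c d : ℝ} (hc : ∀ q, |f q| ≤ c) (hd : ∀ q, |g q| ≤ d)
    (hf0 : ∀ q, 1 < ‖q‖ → f q = 0) (hH : MeasurableSet H) (hH' : MeasurableSet H')
    (hμ : μ (closedBall 0 S)ᶜ = 0) (hD : (1 + R) * S + 1 ≤ D) :
    pairing R D f g μ ν H H' = ∫ z : (Fin (m + 1) → ℝ) × (Fin (m + 1) → ℝ),
      (∫ v in closedBall 0 R, tent R v * (H.indicator 1 (z.1, v) * H'.indicator 1 (z.2, v)) *
        correlation f g (skewProj v (z.1 - z.2))) ∂(μ.prod ν) := by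
  have htent : ∀ p : (Fin m → ℝ) × (Fin m → ℝ), |tent R p.1| ≤ R := fun p => by
    rw [abs_of_nonneg (tent_nonneg R _)]; exact tent_le hR _
  have htm : Measurable fun p : (Fin m → ℝ) × (Fin m → ℝ) => tent R p.1 :=
    (continuous_tent R).measurable.comp measurable_fst
  unfold pairing smooth
  rw [integral_mul_integral_mul_integral μ ν (cubeMeasure m R D) htm
    (measurable_smooth_integrand hf hH) (measurable_smooth_integrand hg hH') htent
    (fun x p => abs_indicator_one_mul_le _ _ (hc _)) (fun x p => abs_indicator_one_mul_le _ _ (hd _))]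
  have hae : ∀ᵐ z ∂(μ.prod ν), z.1 ∈ closedBall (0 : Fin (m + 1) → ℝ) S :=
    Measure.quasiMeasurePreserving_fst.ae (mem_ae_iff.2 hμ)
  refine integral_congr_ae ?_
  filter_upwards [hae] with z hz
  rw [cubeMeasure, integral_prod]
  · refine setIntegral_congr_fun isClosed_closedBall.measurableSet fun v hv => ?_
    simp only
    rw [← setIntegral_mul_eq_correlation hf0 (by simpa using hv) (by simpa using hz) hD,
      ← integral_const_mul]
    refine integral_congr_ae (Eventually.of_forall fun u => ?_)
    simp only
    ring
  · refine integrable_of_abs_le (c := R * c * d) ?_ fun p => ?_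
    · have h1 := (measurable_smooth_integrand hf hH).comp
        (measurable_const.prodMk measurable_id : Measurable fun p => (z.1, p))
      have h2 := (measurable_smooth_integrand hg hH').comp
        (measurable_const.prodMk measurable_id : Measurable fun p => (z.2, p))
      exact (htm.mul h1).mul h2
    · have h1 := abs_indicator_one_mul_le H (z.1, p.1) (hc (p.2 - skewProj p.1 z.1))
      have h2 := abs_indicator_one_mul_le H' (z.2, p.1) (hd (p.2 - skewProj p.1 z.2))
      have h3 := (abs_nonneg _).trans h1
      rw [abs_mul, abs_mul]
      gcongr
      exact htent p

theorem pairing_univ_eq [IsFiniteMeasure μ] [IsFiniteMeasure ν] (hR : 0 ≤ R) (hf : Measurable f)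
    (hg : Measurable g) {c d : ℝ} (hc : ∀ q, |f q| ≤ c) (hd : ∀ q, |g q| ≤ d)
    (hf0 : ∀ q, 1 < ‖q‖ → f q = 0) (hμ : μ (closedBall 0 S)ᶜ = 0) (hD : (1 + R) * S + 1 ≤ D) :
    pairing R D f g μ ν univ univ = ∫ z : (Fin (m + 1) → ℝ) × (Fin (m + 1) → ℝ),
      avgCorrelation R f g (z.1 - z.2) ∂(μ.prod ν) := by
  rw [pairing_eq hR hf hg hc hd hf0 .univ .univ hμ hD]
  refine integral_congr_ae (Eventually.of_forall fun z => ?_)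
  simp only [indicator_univ, Pi.one_apply, mul_one, avgCorrelation]
  exact setIntegral_eq_integral_of_forall_compl_eq_zero fun v hv => by rw [tent_eq_zero hv, zero_mul]

theorem abs_cubeKernel_le {r : ℝ} (hr : 0 < r) (q : Fin m → ℝ) :
    |cubeKernel r q| ≤ ((2 * r) ^ m)⁻¹ := by
  rw [abs_of_nonneg (cubeKernel_nonneg hr q)]; exact cubeKernel_le hr q

theorem pairing_cubeKernel_comm [IsFiniteMeasure μ] [IsFiniteMeasure ν] (hR : 0 ≤ R) {r ρ : ℝ}
    (hr : 0 < r) (hr1 : r ≤ 1) (hρ : 0 < ρ) (hρ1 : ρ ≤ 1) (hH : MeasurableSet H)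
    (hH' : MeasurableSet H') (hμ : μ (closedBall 0 S)ᶜ = 0) (hD : (1 + R) * S + 1 ≤ D) :
    pairing R D (cubeKernel r) (cubeKernel ρ) μ ν H H' =
      pairing R D (cubeKernel ρ) (cubeKernel r) μ ν H H' := by
  rw [pairing_eq hR (measurable_cubeKernel r) (measurable_cubeKernel ρ) (abs_cubeKernel_le hr)
      (abs_cubeKernel_le hρ) (fun q hq => cubeKernel_eq_zero (by linarith)) hH hH' hμ hD,
    pairing_eq hR (measurable_cubeKernel ρ) (measurable_cubeKernel r) (abs_cubeKernel_le hρ)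
      (abs_cubeKernel_le hr) (fun q hq => cubeKernel_eq_zero (by linarith)) hH hH' hμ hD]
  simp only [correlation_cubeKernel_comm r ρ]

end Smoothing

/-! ### Multi-scale estimate -/

section MultiScale

open Filter

variable {m : ℕ} {f g : (Fin m → ℝ) → ℝ} {μ ν : Measure (Fin (m + 1) → ℝ)} {R S D : ℝ}
  {H H' : Set ((Fin (m + 1) → ℝ) × (Fin m → ℝ))}

theorem exists_pairing_diffKernel_le [IsFiniteMeasure μ] (hR : 1 ≤ R) {s : ℝ} (hs : m < s)
    (hs' : s ≤ m + 1) (hE : ∫⁻ z, edist z.1 z.2 ^ (-s) ∂(μ.prod μ) ≠ ∞)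
    (hμ : μ (closedBall 0 S)ᶜ = 0) (hD : (1 + R) * S + 1 ≤ D) :
    ∃ C : ℝ, 0 ≤ C ∧ ∀ r : ℝ, 0 < r → r ≤ 1 →
      pairing R D (diffKernel r) (diffKernel r) μ μ univ univ ≤ C * r ^ (s - m) := by
  have hs0 : 0 < s := (Nat.cast_nonneg m).trans_lt hs
  obtain ⟨C, hC0, hC⟩ := exists_abs_avgCorrelation_le hR hs hs'
  refine ⟨(C + 1) * (∫⁻ z, edist z.1 z.2 ^ (-s) ∂(μ.prod μ)).toReal, by positivity,
    fun r hr hr1 => ?_⟩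
  have hc : 0 < (C + 1) * r ^ (s - m) := by positivity
  rw [pairing_univ_eq (by linarith) (measurable_diffKernel r) (measurable_diffKernel r)
    (abs_diffKernel_le hr) (abs_diffKernel_le hr)
    (fun q hq => diffKernel_eq_zero hr (by linarith)) hμ hD]
  set F : (Fin (m + 1) → ℝ) × (Fin (m + 1) → ℝ) → ℝ :=
    fun z => avgCorrelation R (diffKernel r) (diffKernel r) (z.1 - z.2) with hF
  have key : ‖∫ z, F z ∂(μ.prod μ)‖ₑ ≤
      ENNReal.ofReal ((C + 1) * r ^ (s - m)) * ∫⁻ z, edist z.1 z.2 ^ (-s) ∂(μ.prod μ) := by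
    rw [← lintegral_const_mul' _ _ ENNReal.ofReal_ne_top]
    refine (enorm_integral_le_lintegral_enorm _).trans (lintegral_mono fun z => ?_)
    rcases eq_or_ne (z.1 - z.2) 0 with h | h
    · rw [sub_eq_zero] at h
      rw [h, edist_self, ENNReal.zero_rpow_of_neg (by linarith), ENNReal.mul_top (by simpa using hc)]
      exact le_top
    · have hn : 0 < ‖z.1 - z.2‖ := norm_pos_iff.2 h
      rw [edist_dist, dist_eq_norm, ENNReal.ofReal_rpow_of_pos hn,
        ← ENNReal.ofReal_mul hc.le, Real.enorm_eq_ofReal_abs]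
      refine ENNReal.ofReal_le_ofReal ((hC r hr _ h).trans ?_)
      gcongr
      linarith
  have := ENNReal.toReal_mono (by finiteness) key
  rw [toReal_enorm, ENNReal.toReal_mul, ENNReal.toReal_ofReal hc.le] at this
  calc _ ≤ _ := Real.le_norm_self _
    _ ≤ _ := this
    _ = _ := by ring

/-- The part of the energies of the projections of `ν` coming from the sections of `H`. -/
noncomputable def sectionEnergy (β R : ℝ) (ν : Measure (Fin (m + 1) → ℝ))
    (H : Set ((Fin (m + 1) → ℝ) × (Fin m → ℝ))) : ℝ≥0∞ :=
  ∫⁻ p in {p : ((Fin (m + 1) → ℝ) × (Fin (m + 1) → ℝ)) × (Fin m → ℝ) |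
    (p.1.1, p.2) ∈ H ∧ (p.1.2, p.2) ∈ H}, edist (skewProj p.2 p.1.1) (skewProj p.2 p.1.2) ^ (-β)
    ∂((ν.prod ν).prod (volume.restrict (closedBall 0 R)))

theorem measurable_edist_skewProj (β : ℝ) :
    Measurable fun p : ((Fin (m + 1) → ℝ) × (Fin (m + 1) → ℝ)) × (Fin m → ℝ) =>
      edist (skewProj p.2 p.1.1) (skewProj p.2 p.1.2) ^ (-β) := by
  have h1 : Measurable fun p : ((Fin (m + 1) → ℝ) × (Fin (m + 1) → ℝ)) × (Fin m → ℝ) =>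
      skewProj p.2 p.1.1 := continuous_skewProj.measurable.comp
        (measurable_snd.prodMk (measurable_fst.comp measurable_fst))
  have h2 : Measurable fun p : ((Fin (m + 1) → ℝ) × (Fin (m + 1) → ℝ)) × (Fin m → ℝ) =>
      skewProj p.2 p.1.2 := continuous_skewProj.measurable.comp
        (measurable_snd.prodMk (measurable_snd.comp measurable_fst))
  exact (h1.edist h2).pow_const _

theorem measurableSet_sectionPair (hH : MeasurableSet H) :
    MeasurableSet {p : ((Fin (m + 1) → ℝ) × (Fin (m + 1) → ℝ)) × (Fin m → ℝ) |
      (p.1.1, p.2) ∈ H ∧ (p.1.2, p.2) ∈ H} :=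
  (((measurable_fst.comp measurable_fst).prodMk measurable_snd) hH).inter
    (((measurable_snd.comp measurable_fst).prodMk measurable_snd) hH)

theorem correlation_cubeKernel_eq_zero {r : ℝ} {a : Fin m → ℝ} (h : 2 * r < ‖a‖) :
    correlation (cubeKernel r) (cubeKernel r) a = 0 := by
  refine integral_eq_zero_of_ae (Eventually.of_forall fun q => ?_)
  simp only [Pi.zero_apply, mul_eq_zero]
  by_cases hq : r < ‖q‖
  · exact Or.inl (cubeKernel_eq_zero hq)
  · refine Or.inr (cubeKernel_eq_zero ?_)
    have := norm_sub_norm_le a (-q)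
    rw [norm_neg, sub_neg_eq_add, add_comm] at this
    linarith

theorem abs_correlation_cubeKernel_le {r : ℝ} (hr : 0 < r) (a : Fin m → ℝ) :
    |correlation (cubeKernel r) (cubeKernel r) a| ≤ ((2 * r) ^ m)⁻¹ := by
  have h := abs_integral_mul_le (integrable_cubeKernel r) (h := fun q => cubeKernel r (q + a))
    (m := m) fun q => abs_cubeKernel_le hr _
  simpa only [abs_of_nonneg (cubeKernel_nonneg hr _), integral_cubeKernel hr, one_mul] using! h

theorem enorm_correlation_cubeKernel_le {r β : ℝ} (hr : 0 < r) (hβ : 0 < β) (a b : Fin m → ℝ) :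
    ‖correlation (cubeKernel r) (cubeKernel r) (a - b)‖ₑ ≤
      ENNReal.ofReal ((2 * r) ^ (β - m)) * edist a b ^ (-β) := by
  have hc : 0 < (2 * r) ^ (β - m) := by positivity
  rcases eq_or_ne (a - b) 0 with h | h
  · rw [sub_eq_zero] at h
    rw [h, edist_self, ENNReal.zero_rpow_of_neg (by linarith), ENNReal.mul_top (by simpa using hc)]
    exact le_top
  have hn : 0 < ‖a - b‖ := norm_pos_iff.2 h
  rw [edist_dist, dist_eq_norm, ENNReal.ofReal_rpow_of_pos hn, ← ENNReal.ofReal_mul hc.le,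
    Real.enorm_eq_ofReal_abs]
  refine ENNReal.ofReal_le_ofReal ?_
  rcases le_or_gt ‖a - b‖ (2 * r) with h2 | h2
  · refine (abs_correlation_cubeKernel_le hr _).trans ?_
    rw [Real.rpow_sub (by positivity), Real.rpow_natCast, div_eq_mul_inv, mul_right_comm,
      Real.rpow_neg hn.le]
    refine le_mul_of_one_le_left (by positivity) ?_
    rw [← div_eq_mul_inv, one_le_div (by positivity)]
    gcongr
  · rw [correlation_cubeKernel_eq_zero h2, abs_zero]
    positivity

theorem pairing_cubeKernel_self_le [IsFiniteMeasure ν] (hR : 0 ≤ R) {r β : ℝ} (hr : 0 < r)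
    (hr1 : r ≤ 1) (hβ : 0 < β) (hH : MeasurableSet H) (hE : sectionEnergy β R ν H ≠ ∞)
    (hν : ν (closedBall 0 S)ᶜ = 0) (hD : (1 + R) * S + 1 ≤ D) :
    pairing R D (cubeKernel r) (cubeKernel r) ν ν H H ≤
      R * (2 * r) ^ (β - m) * (sectionEnergy β R ν H).toReal := by
  rw [pairing_eq hR (measurable_cubeKernel r) (measurable_cubeKernel r) (abs_cubeKernel_le hr)
      (abs_cubeKernel_le hr) (fun q hq => cubeKernel_eq_zero (by linarith)) hH hH hν hD]
  have hc : 0 ≤ R * (2 * r) ^ (β - m) := by positivity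
  set F : (Fin (m + 1) → ℝ) × (Fin (m + 1) → ℝ) → (Fin m → ℝ) → ℝ := fun z v =>
    tent R v * (H.indicator 1 (z.1, v) * H.indicator 1 (z.2, v)) *
      correlation (cubeKernel r) (cubeKernel r) (skewProj v (z.1 - z.2)) with hF
  have key : ‖∫ z, (∫ v in closedBall 0 R, F z v) ∂(ν.prod ν)‖ₑ ≤
      ENNReal.ofReal (R * (2 * r) ^ (β - m)) * sectionEnergy β R ν H := by
    rw [sectionEnergy, ← lintegral_indicator (measurableSet_sectionPair hH),
      lintegral_prod _ (((measurable_edist_skewProj β).indicator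
        (measurableSet_sectionPair hH)).aemeasurable),
      ← lintegral_const_mul' _ _ ENNReal.ofReal_ne_top]
    refine (enorm_integral_le_lintegral_enorm _).trans (lintegral_mono fun z => ?_)
    refine (enorm_integral_le_lintegral_enorm _).trans ?_
    rw [← lintegral_const_mul' _ _ ENNReal.ofReal_ne_top]
    refine lintegral_mono fun v => ?_
    by_cases h1 : (z.1, v) ∈ H
    swap
    · simp [hF, h1]
    by_cases h2 : (z.2, v) ∈ H
    swap
    · simp [hF, h2]
    rw [indicator_of_mem (by exact ⟨h1, h2⟩)]
    simp only [hF, h1, h2, indicator_of_mem, Pi.one_apply, mul_one, enorm_mul]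
    rw [skewProj_sub, ENNReal.ofReal_mul hR, mul_assoc]
    gcongr
    · rw [Real.enorm_of_nonneg (tent_nonneg R v)]
      exact ENNReal.ofReal_le_ofReal (tent_le hR v)
    · exact enorm_correlation_cubeKernel_le hr hβ _ _
  have := ENNReal.toReal_mono (by finiteness) key
  rw [toReal_enorm, ENNReal.toReal_mul, ENNReal.toReal_ofReal hc] at this
  exact (Real.le_norm_self _).trans this

theorem integrable_tent_mul {F G : (Fin m → ℝ) × (Fin m → ℝ) → ℝ} (hR : 0 ≤ R)
    (hF : Measurable F) (hG : Measurable G) {c d : ℝ} (hc : ∀ p, |F p| ≤ c) (hd : ∀ p, |G p| ≤ d) :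
    Integrable (fun p => tent R p.1 * F p * G p) (cubeMeasure m R D) := by
  refine integrable_of_abs_le (c := R * c * d)
    ((((continuous_tent R).measurable.comp measurable_fst).mul hF).mul hG) fun p => ?_
  have h1 := (abs_nonneg _).trans (hc p)
  rw [abs_mul, abs_mul, abs_of_nonneg (tent_nonneg R _)]
  gcongr
  exacts [tent_le hR _, hc p, hd p]

theorem pairing_half_sub_le [IsProbabilityMeasure μ] [IsProbabilityMeasure ν] (hR : 0 ≤ R) {r : ℝ}
    (hr : 0 < r) (hr1 : r ≤ 1) (hH : MeasurableSet H)
    (hμ : μ (closedBall 0 S)ᶜ = 0) (hD : (1 + R) * S + 1 ≤ D) {c : ℝ} (hc : 0 < c) :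
    pairing R D (cubeKernel (r / 2)) (cubeKernel (r / 2)) μ ν univ H ≤
      pairing R D (cubeKernel r) (cubeKernel r) μ ν univ H +
      (c / 2 * pairing R D (diffKernel r) (diffKernel r) μ μ univ univ +
      c⁻¹ * (pairing R D (cubeKernel (r / 2)) (cubeKernel (r / 2)) ν ν H H +
        pairing R D (cubeKernel r) (cubeKernel r) ν ν H H)) := by
  have hr2 : 0 < r / 2 := by linarith
  have hcomm := pairing_cubeKernel_comm (μ := μ) (ν := ν) (H := univ) (H' := H) hR hr hr1 hr2
    (by linarith) .univ hH hμ hD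
  have hd : ∀ p, smooth (diffKernel r) μ univ p =
      smooth (cubeKernel (r / 2)) μ univ p - smooth (cubeKernel r) μ univ p :=
    fun p => smooth_sub (measurable_cubeKernel _) (measurable_cubeKernel _) (abs_cubeKernel_le hr2)
      (abs_cubeKernel_le hr) .univ p
  have hM (ρ : ℝ) : Measurable (smooth (cubeKernel ρ) μ univ) :=
    measurable_smooth (measurable_cubeKernel _) .univ
  have hN (ρ : ℝ) : Measurable (smooth (cubeKernel ρ) ν H) :=
    measurable_smooth (measurable_cubeKernel _) hH
  have hMb {ρ : ℝ} (hρ : 0 < ρ) := abs_smooth_le (μ := μ) (H := univ) (abs_cubeKernel_le (m := m) hρ)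
  have hNb {ρ : ℝ} (hρ : 0 < ρ) := abs_smooth_le (μ := ν) (H := H) (abs_cubeKernel_le (m := m) hρ)
  have hdm : Measurable (smooth (diffKernel r) μ univ) :=
    measurable_smooth (measurable_diffKernel _) .univ
  have hdb := abs_smooth_le (μ := μ) (H := univ) (abs_diffKernel_le (m := m) hr)
  have i1 := integrable_tent_mul (D := D) hR (hM (r / 2)) (hN (r / 2)) (hMb hr2) (hNb hr2)
  have i2 := integrable_tent_mul (D := D) hR (hM r) (hN r) (hMb hr) (hNb hr)
  have i3 := integrable_tent_mul (D := D) hR (hM (r / 2)) (hN r) (hMb hr2) (hNb hr)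
  have i4 := integrable_tent_mul (D := D) hR (hM r) (hN (r / 2)) (hMb hr) (hNb hr2)
  have i5 := integrable_tent_mul (D := D) hR hdm hdm hdb hdb
  have i6 := integrable_tent_mul (D := D) hR (hN (r / 2)) (hN (r / 2)) (hNb hr2) (hNb hr2)
  have i7 := integrable_tent_mul (D := D) hR (hN r) (hN r) (hNb hr) (hNb hr)
  unfold pairing at hcomm ⊢
  have hmono := integral_mono (i1.add i3) ((i2.add i4).add ((i5.const_mul (c / 2)).add
    ((i6.add i7).const_mul c⁻¹))) fun p => ?_
  · rw [integral_add' i1 i3, integral_add' (i2.add i4) ((i5.const_mul (c / 2)).add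
      ((i6.add i7).const_mul c⁻¹)), integral_add' (i5.const_mul (c / 2))
      ((i6.add i7).const_mul c⁻¹), integral_const_mul, integral_const_mul,
      integral_add' i2 i4, integral_add' i6 i7] at hmono
    linarith
  · simp only [Pi.add_apply, hd]
    have ht := tent_nonneg R p.1
    generalize tent R p.1 = t at *
    generalize smooth (cubeKernel (r / 2)) μ univ p = M'
    generalize smooth (cubeKernel r) μ univ p = M
    generalize smooth (cubeKernel (r / 2)) ν H p = N'
    generalize smooth (cubeKernel r) ν H p = N
    have key : (M' - M) * (N' + N) ≤ c / 2 * (M' - M) ^ 2 + c⁻¹ * (N' ^ 2 + N ^ 2) := by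
      have h1 : 0 ≤ (2 * c)⁻¹ * (c * (M' - M) - (N' + N)) ^ 2 := by positivity
      have h2 : 0 ≤ (2 * c)⁻¹ * (N' - N) ^ 2 := by positivity
      have h3 : (2 * c)⁻¹ * (c * (M' - M) - (N' + N)) ^ 2 + (2 * c)⁻¹ * (N' - N) ^ 2 =
          c / 2 * (M' - M) ^ 2 + c⁻¹ * (N' ^ 2 + N ^ 2) - (M' - M) * (N' + N) := by
        field_simp; ring
      linarith
    have := mul_le_mul_of_nonneg_left key ht
    nlinarith

theorem exists_pairing_one_le [IsProbabilityMeasure μ] [IsProbabilityMeasure ν] (hR : 0 ≤ R) :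
    ∃ C : ℝ, 0 ≤ C ∧ ∀ H : Set ((Fin (m + 1) → ℝ) × (Fin m → ℝ)), MeasurableSet H → ∀ η : ℝ, 0 < η →
      pairing R D (cubeKernel 1) (cubeKernel 1) μ ν univ H ≤
      C * η + η⁻¹ * pairing R D (cubeKernel 1) (cubeKernel 1) ν ν H H := by
  refine ⟨R * ((cubeMeasure m R D).real univ), by positivity, fun H hH η hη => ?_⟩
  have hM : Measurable (smooth (cubeKernel 1) μ univ) :=
    measurable_smooth (measurable_cubeKernel _) .univ
  have hN : Measurable (smooth (cubeKernel 1) ν H) :=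
    measurable_smooth (measurable_cubeKernel _) hH
  have hMb := abs_smooth_le (μ := μ) (H := univ) (abs_cubeKernel_le (m := m) one_pos)
  have hNb := abs_smooth_le (μ := ν) (H := H) (abs_cubeKernel_le (m := m) one_pos)
  have i1 := integrable_tent_mul (D := D) hR hM hN hMb hNb
  have i2 := integrable_tent_mul (D := D) hR hN hN hNb hNb
  unfold pairing
  have hmono := integral_mono i1 ((integrable_const (R * η)).add (i2.const_mul η⁻¹)) fun p => ?_
  · simp only [Pi.add_apply] at hmono
    rw [integral_add (integrable_const _) (i2.const_mul η⁻¹), integral_const,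
      integral_const_mul, smul_eq_mul] at hmono
    linarith
  · simp only [Pi.add_apply]
    have ht := tent_nonneg R p.1
    have ht' := tent_le hR p.1
    have hM1 : |smooth (cubeKernel 1) μ univ p| ≤ 1 :=
      (hMb p).trans (inv_le_one_of_one_le₀ (one_le_pow₀ (by norm_num)))
    generalize tent R p.1 = t at *
    generalize smooth (cubeKernel 1) μ univ p = M at *
    generalize smooth (cubeKernel 1) ν H p = N
    have hM2 : M ^ 2 ≤ 1 := (sq_le_one_iff_abs_le_one M).2 hM1
    have key : M * N ≤ η * M ^ 2 + η⁻¹ * N ^ 2 := by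
      have h1 : 0 ≤ (2 * η)⁻¹ * (η * M - N) ^ 2 := by positivity
      have h2 : (2 * η)⁻¹ * (η * M - N) ^ 2 = (η * M ^ 2 + η⁻¹ * N ^ 2) / 2 - M * N := by
        field_simp; ring
      have h3 : 0 ≤ η * M ^ 2 + η⁻¹ * N ^ 2 := by positivity
      linarith
    have h1 := mul_le_mul_of_nonneg_left key ht
    have h2 : t * (η * M ^ 2) ≤ R * (η * 1) := by gcongr
    nlinarith

/-- Up to a small error, the mollified pairing is controlled by the energy of `ν` on `H`, uniformly
over all scales. -/
theorem exists_pairing_cubeKernel_le [IsProbabilityMeasure μ] [IsProbabilityMeasure ν] (hR : 1 ≤ R)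
    {s β : ℝ} (hs : m < s) (hs' : s ≤ m + 1) (hβ : 0 < β) (hβm : β ≤ m) (hsβ : 2 * m < s + β)
    (hE : ∫⁻ z, edist z.1 z.2 ^ (-s) ∂(μ.prod μ) ≠ ∞) (hμ : μ (closedBall 0 S)ᶜ = 0)
    (hν : ν (closedBall 0 S)ᶜ = 0) (hD : (1 + R) * S + 1 ≤ D) :
    ∃ C : ℝ, 0 ≤ C ∧ ∀ H : Set ((Fin (m + 1) → ℝ) × (Fin m → ℝ)), MeasurableSet H →
      sectionEnergy β R ν H ≠ ∞ → ∀ η : ℝ, 0 < η → ∀ J : ℕ,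
      pairing R D (cubeKernel ((2⁻¹ : ℝ) ^ J)) (cubeKernel ((2⁻¹ : ℝ) ^ J)) μ ν univ H ≤
      C * (η + η⁻¹ * (sectionEnergy β R ν H).toReal) := by
  have hR0 : 0 ≤ R := by linarith
  obtain ⟨C₁, hC₁, h₁⟩ := exists_pairing_diffKernel_le hR hs hs' hE hμ hD
  obtain ⟨C₀, hC₀, h₀⟩ := exists_pairing_one_le (μ := μ) (ν := ν) (D := D) hR0
  set κ : ℝ := (s + β) / 2 - m with hκ
  have hκ0 : 0 < κ := by rw [hκ]; linarith
  set q : ℝ := (2⁻¹ : ℝ) ^ κ with hq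
  have hq0 : 0 < q := by positivity
  have hq1 : q < 1 := Real.rpow_lt_one (by norm_num) (by norm_num) hκ0
  set C₂ : ℝ := C₁ + 2 * R with hC₂
  have hC₂0 : 0 ≤ C₂ := by positivity
  refine ⟨(C₀ + R) + C₂ * (1 - q)⁻¹, by
    have : 0 ≤ (1 - q)⁻¹ := inv_nonneg.2 (by linarith)
    positivity, fun H hH hEH η hη J => ?_⟩
  set E := (sectionEnergy β R ν H).toReal with hEdef
  have hE0 : 0 ≤ E := ENNReal.toReal_nonneg
  set X : ℝ := η + η⁻¹ * E with hX
  have hX0 : 0 ≤ X := by positivity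
  have hB {r : ℝ} (hr : 0 < r) (hr1 : r ≤ 1) :=
    pairing_cubeKernel_self_le hR0 hr hr1 hβ hH hEH hν hD
  set Q : ℝ → ℝ := fun r => pairing R D (cubeKernel r) (cubeKernel r) μ ν univ H with hQ
  have htwo : (2 : ℝ) ^ (β - m) ≤ 1 := Real.rpow_le_one_of_one_le_of_nonpos (by norm_num) (by linarith)
  have hzero : Q 1 ≤ (C₀ + R) * X := by
    have h1 := h₀ H hH η hη
    have h2 := hB one_pos le_rfl
    rw [mul_one] at h2
    have h3 : R * 2 ^ (β - m) * E ≤ R * E := by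
      have : R * 2 ^ (β - m) ≤ R := mul_le_of_le_one_right hR0 htwo
      gcongr
    have h4 : η⁻¹ * pairing R D (cubeKernel 1) (cubeKernel 1) ν ν H H ≤ η⁻¹ * (R * E) := by
      gcongr; linarith
    have h5 : 0 ≤ C₀ * (η⁻¹ * E) := by positivity
    have h6 : 0 ≤ R * η := by positivity
    simp only [hQ, hX]
    nlinarith
  have hstep : ∀ r : ℝ, 0 < r → r ≤ 1 → Q (r / 2) ≤ Q r + C₂ * X * r ^ κ := fun r hr hr1 => by
    set c : ℝ := η * r ^ ((β - s) / 2) with hc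
    have hc0 : 0 < c := by positivity
    have h1 := pairing_half_sub_le (ν := ν) hR0 hr hr1 hH hμ hD hc0
    have h2 := h₁ r hr hr1
    have h3 := hB hr hr1
    have h4 := hB (half_pos hr) (by linarith)
    rw [mul_div_cancel₀ r (two_ne_zero' ℝ)] at h4
    have e1 : c / 2 * pairing R D (diffKernel r) (diffKernel r) μ μ univ univ ≤
        C₁ * η * r ^ κ := by
      calc _ ≤ c / 2 * (C₁ * r ^ (s - m)) := by gcongr
        _ = C₁ * η * (r ^ ((β - s) / 2) * r ^ (s - m)) / 2 := by rw [hc]; ring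
        _ = C₁ * η * r ^ κ / 2 := by
          rw [← Real.rpow_add hr]; congr 3; rw [hκ]; ring
        _ ≤ _ := half_le_self (by positivity)
    have e2 : c⁻¹ * (pairing R D (cubeKernel (r / 2)) (cubeKernel (r / 2)) ν ν H H +
        pairing R D (cubeKernel r) (cubeKernel r) ν ν H H) ≤ 2 * R * (η⁻¹ * E) * r ^ κ := by
      have e3 : R * (2 * r) ^ (β - m) * E ≤ R * r ^ (β - m) * E := by
        rw [Real.mul_rpow (by norm_num) hr.le]
        have : (2 : ℝ) ^ (β - m) * r ^ (β - m) ≤ r ^ (β - m) :=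
          mul_le_of_le_one_left (by positivity) htwo
        gcongr
      calc _ ≤ c⁻¹ * (R * r ^ (β - m) * E + R * r ^ (β - m) * E) := by
            gcongr
            exact h3.trans e3
        _ = 2 * R * (η⁻¹ * E) * ((r ^ ((β - s) / 2))⁻¹ * r ^ (β - m)) := by
            rw [hc, mul_inv]; ring
        _ = _ := by
            rw [← Real.rpow_neg hr.le, ← Real.rpow_add hr]; congr 2; rw [hκ]; ring
    have hp : 0 < r ^ κ := by positivity
    have e4 : C₁ * η * r ^ κ + 2 * R * (η⁻¹ * E) * r ^ κ ≤ C₂ * X * r ^ κ := by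
      rw [← add_mul]
      gcongr
      rw [hC₂, hX]
      have h5 : 0 ≤ C₁ * (η⁻¹ * E) := by positivity
      have h6 : 0 ≤ R * η := by positivity
      nlinarith
    simp only [hQ]
    linarith
  have hsum : ∀ J : ℕ, Q ((2⁻¹ : ℝ) ^ J) ≤ (C₀ + R) * X + C₂ * X * ∑ j ∈ Finset.range J, q ^ j := by
    intro J
    induction J with
    | zero => simpa using hzero
    | succ J ih =>
      have h1 := hstep ((2⁻¹ : ℝ) ^ J) (by positivity) (pow_le_one₀ (by norm_num) (by norm_num))
      have h2 : ((2⁻¹ : ℝ) ^ J) ^ κ = q ^ J := by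
        rw [hq, ← Real.rpow_natCast, ← Real.rpow_mul (by norm_num), mul_comm, Real.rpow_mul (by norm_num),
          Real.rpow_natCast]
      rw [h2, div_eq_mul_inv, ← pow_succ] at h1
      rw [Finset.sum_range_succ]
      linarith
  have hgeom : ∑ j ∈ Finset.range J, q ^ j ≤ (1 - q)⁻¹ := by
    rw [← tsum_geometric_of_lt_one hq0.le hq1]
    exact (summable_geometric_of_lt_one hq0.le hq1).sum_le_tsum _ fun _ _ => by positivity
  calc _ ≤ _ := hsum J
    _ ≤ (C₀ + R) * X + C₂ * X * (1 - q)⁻¹ := by gcongr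
    _ = _ := by ring

end MultiScale

/-! ### Intersections of projections in positively many directions -/

section Intersection

open Filter Topology

variable {m : ℕ} {μ ν : Measure (Fin (m + 1) → ℝ)} {R S D : ℝ}
  {H : Set ((Fin (m + 1) → ℝ) × (Fin m → ℝ))} {K : Set (Fin (m + 1) → ℝ)}

theorem exists_pos_measure_le_abs_sub [IsProbabilityMeasure μ] [IsProbabilityMeasure ν]
    (hμ : ∀ c : ℝ, μ {x | x 0 = c} = 0) :
    ∃ a : ℝ, 0 < a ∧ (μ.prod ν) {z | a ≤ |(z.1 - z.2) 0|} ≠ 0 := by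
  have hm : Measurable fun z : (Fin (m + 1) → ℝ) × (Fin (m + 1) → ℝ) => (z.1 - z.2) 0 :=
    (measurable_pi_apply 0).comp (measurable_fst.sub measurable_snd)
  by_contra! hcon
  have h0 : (μ.prod ν) {z | (z.1 - z.2) 0 = 0} = 0 := by
    have hms : MeasurableSet {z : (Fin (m + 1) → ℝ) × (Fin (m + 1) → ℝ) | (z.1 - z.2) 0 = 0} :=
      hm (measurableSet_singleton 0)
    rw [Measure.prod_apply_symm hms]
    refine (lintegral_congr fun y => ?_).trans lintegral_zero
    convert hμ (y 0) using 2
    ext x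
    simp [sub_eq_zero]
  have h1 : (μ.prod ν) (⋃ k : ℕ, {z | 1 / ((k : ℝ) + 1) ≤ |(z.1 - z.2) 0|}) = 0 :=
    measure_iUnion_null fun k => hcon _ (by positivity)
  have h2 : (univ : Set ((Fin (m + 1) → ℝ) × (Fin (m + 1) → ℝ))) ⊆ {z | (z.1 - z.2) 0 = 0} ∪
      ⋃ k : ℕ, {z | 1 / ((k : ℝ) + 1) ≤ |(z.1 - z.2) 0|} := fun z _ => by
    by_cases hz : (z.1 - z.2) 0 = 0
    · exact Or.inl hz
    · obtain ⟨k, hk⟩ := exists_nat_one_div_lt (abs_pos.2 hz)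
      exact Or.inr (mem_iUnion.2 ⟨k, hk.le⟩)
  have := measure_mono_null h2 (measure_union_null h0 h1)
  simp at this

theorem measurable_correlation {f g : (Fin m → ℝ) → ℝ} (hf : Measurable f) (hg : Measurable g) :
    Measurable (correlation f g) := by
  have : Measurable fun p : (Fin m → ℝ) × (Fin m → ℝ) => f p.2 * g (p.2 + p.1) :=
    (hf.comp measurable_snd).mul (hg.comp (measurable_snd.add measurable_fst))
  exact this.stronglyMeasurable.integral_prod_right'.measurable

theorem measurable_avgCorrelation {f g : (Fin m → ℝ) → ℝ} (hf : Measurable f) (hg : Measurable g) :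
    Measurable (avgCorrelation R f g) := by
  have : Measurable fun p : (Fin (m + 1) → ℝ) × (Fin m → ℝ) =>
      tent R p.2 * correlation f g (skewProj p.2 p.1) :=
    ((continuous_tent R).measurable.comp measurable_snd).mul ((measurable_correlation hf hg).comp
      (continuous_skewProj.measurable.comp measurable_swap))
  exact this.stronglyMeasurable.integral_prod_right'.measurable

theorem avgCorrelation_cubeKernel_nonneg {r : ℝ} (hr : 0 < r) (z : Fin (m + 1) → ℝ) :
    0 ≤ avgCorrelation R (cubeKernel r) (cubeKernel r) z :=
  integral_nonneg fun v => mul_nonneg (tent_nonneg R v) <| integral_nonneg fun _ =>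
    mul_nonneg (cubeKernel_nonneg hr _) (cubeKernel_nonneg hr _)

theorem le_pairing_univ [IsProbabilityMeasure μ] [IsProbabilityMeasure ν] {a : ℝ} (ha : 0 < a)
    (hR : 1 ≤ R) (haR : 2 * S + 2 ≤ (R - 1) * a) {r : ℝ} (hr : 0 < r) (hr1 : r ≤ 1)
    (hμ : μ (closedBall 0 S)ᶜ = 0) (hν : ν (closedBall 0 S)ᶜ = 0) (hD : (1 + R) * S + 1 ≤ D) :
    ((2 * S) ^ m)⁻¹ * (μ.prod ν).real {z | a ≤ |(z.1 - z.2) 0|} ≤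
      pairing R D (cubeKernel r) (cubeKernel r) μ ν univ univ := by
  rw [pairing_univ_eq (by linarith) (measurable_cubeKernel r) (measurable_cubeKernel r)
    (abs_cubeKernel_le hr) (abs_cubeKernel_le hr) (fun q hq => cubeKernel_eq_zero (by linarith))
    hμ hD]
  have hm : Measurable fun z : (Fin (m + 1) → ℝ) × (Fin (m + 1) → ℝ) => (z.1 - z.2) 0 :=
    (measurable_pi_apply 0).comp (measurable_fst.sub measurable_snd)
  have hmA : MeasurableSet {z : (Fin (m + 1) → ℝ) × (Fin (m + 1) → ℝ) | a ≤ |(z.1 - z.2) 0|} :=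
    measurableSet_le measurable_const hm.abs
  rw [mul_comm, ← smul_eq_mul, ← integral_indicator_const _ hmA]
  have h1 : ∀ᵐ z ∂(μ.prod ν), z.1 ∈ closedBall (0 : Fin (m + 1) → ℝ) S :=
    Measure.quasiMeasurePreserving_fst.ae (mem_ae_iff.2 hμ)
  have h2 : ∀ᵐ z ∂(μ.prod ν), z.2 ∈ closedBall (0 : Fin (m + 1) → ℝ) S :=
    Measure.quasiMeasurePreserving_snd.ae (mem_ae_iff.2 hν)
  refine integral_mono_ae ((integrable_const _).indicator hmA) ?_ ?_
  · refine integrable_of_abs_le (c := (∫ v, |tent (m := m) R v|) * ((2 * r) ^ m)⁻¹)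
      ((measurable_avgCorrelation (measurable_cubeKernel r) (measurable_cubeKernel r)).comp
        (measurable_fst.sub measurable_snd)) fun z => ?_
    exact abs_integral_mul_le (integrable_tent R) fun v => abs_correlation_cubeKernel_le hr _
  · filter_upwards [h1, h2] with z hz1 hz2
    by_cases hz : a ≤ |(z.1 - z.2) 0|
    · rw [indicator_of_mem (by exact hz)]
      have hpos : 0 < |(z.1 - z.2) 0| := ha.trans_le hz
      have hn : ‖z.1 - z.2‖ ≤ 2 * S := by
        have := norm_sub_le z.1 z.2
        rw [mem_closedBall_zero_iff] at hz1 hz2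
        linarith
      refine le_trans ?_ (le_avgCorrelation_cubeKernel hr (abs_pos.1 hpos) ?_)
      · gcongr
        exact (abs_zero_le_norm _).trans hn
      · have h3 := (norm_tail_le (z.1 - z.2)).trans hn
        have h4 : (R - 1) * a ≤ (R - 1) * |(z.1 - z.2) 0| := by gcongr
        linarith
    · rw [indicator_of_notMem (by exact hz)]
      exact avgCorrelation_cubeKernel_nonneg hr _

theorem pairing_univ_eq_of_subset [IsFiniteMeasure μ] [IsFiniteMeasure ν] (hR : 0 ≤ R) {r : ℝ}
    (hr : 0 < r) (hr1 : r ≤ 1) (hH : MeasurableSet H) (hK : μ Kᶜ = 0)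
    (hKH : ∀ y v, (∃ x ∈ K, ‖skewProj v x - skewProj v y‖ ≤ 2 * r) → (y, v) ∈ H)
    (hμ : μ (closedBall 0 S)ᶜ = 0) (hD : (1 + R) * S + 1 ≤ D) :
    pairing R D (cubeKernel r) (cubeKernel r) μ ν univ univ =
      pairing R D (cubeKernel r) (cubeKernel r) μ ν univ H := by
  have heq {H' : Set ((Fin (m + 1) → ℝ) × (Fin m → ℝ))} (hH' : MeasurableSet H') :=
    pairing_eq (μ := μ) (ν := ν) (H := univ) hR (measurable_cubeKernel r) (measurable_cubeKernel r)
      (abs_cubeKernel_le hr) (abs_cubeKernel_le hr)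
      (fun q hq => cubeKernel_eq_zero (by linarith)) .univ hH' hμ hD
  rw [heq .univ, heq hH]
  refine integral_congr_ae ?_
  have h1 : ∀ᵐ z ∂(μ.prod ν), z.1 ∈ K := Measure.quasiMeasurePreserving_fst.ae (mem_ae_iff.2 hK)
  filter_upwards [h1] with z hz
  refine integral_congr_ae (Eventually.of_forall fun v => ?_)
  simp only
  by_cases hv : (z.2, v) ∈ H
  · simp [hv]
  · rw [correlation_cubeKernel_eq_zero, mul_zero, mul_zero]
    by_contra! hcon
    rw [skewProj_sub] at hcon
    exact hv (hKH _ _ ⟨z.1, hz, hcon⟩)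

theorem isClosed_exists_norm_skewProj_sub_le (hK : IsCompact K) (c : ℝ) :
    IsClosed {p : (Fin (m + 1) → ℝ) × (Fin m → ℝ) |
      ∃ x ∈ K, ‖skewProj p.2 x - skewProj p.2 p.1‖ ≤ c} := by
  have := isCompact_iff_compactSpace.1 hK
  have hc : IsClosed {q : K × ((Fin (m + 1) → ℝ) × (Fin m → ℝ)) |
      ‖skewProj q.2.2 q.1 - skewProj q.2.2 q.2.1‖ ≤ c} := by
    refine isClosed_le (Continuous.norm (Continuous.sub ?_ ?_)) continuous_const
    · exact continuous_skewProj.comp ((continuous_snd.comp continuous_snd).prodMk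
        (continuous_subtype_val.comp continuous_fst))
    · exact continuous_skewProj.comp ((continuous_snd.comp continuous_snd).prodMk
        (continuous_fst.comp continuous_snd))
  convert isClosedMap_snd_of_compactSpace _ hc using 1
  ext p
  simp

theorem isCompact_skewProj_image (hK : IsCompact K) (v : Fin m → ℝ) :
    IsCompact (skewProj v '' K) :=
  hK.image (continuous_skewProj.comp (Continuous.prodMk_right v))

theorem iInter_exists_norm_skewProj_sub_le (hK : IsCompact K) :
    ⋂ J : ℕ, {p : (Fin (m + 1) → ℝ) × (Fin m → ℝ) |
      ∃ x ∈ K, ‖skewProj p.2 x - skewProj p.2 p.1‖ ≤ 2 * (2⁻¹ : ℝ) ^ J} =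
    {p | skewProj p.2 p.1 ∈ skewProj p.2 '' K} := by
  ext ⟨y, v⟩
  refine ⟨fun h => ?_, ?_⟩
  · have h : ∀ J : ℕ, ∃ x ∈ K, ‖skewProj v x - skewProj v y‖ ≤ 2 * (2⁻¹ : ℝ) ^ J :=
      fun J => mem_iInter.1 h J
    obtain ⟨x₀, hx₀, -⟩ := h 0
    show skewProj v y ∈ skewProj v '' K
    rw [(isCompact_skewProj_image hK v).isClosed.mem_iff_infDist_zero ⟨_, x₀, hx₀, rfl⟩]
    have hle : ∀ J : ℕ, infDist (skewProj v y) (skewProj v '' K) ≤ 2 * (2⁻¹ : ℝ) ^ J := fun J => by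
      obtain ⟨x, hx, hxy⟩ := h J
      refine (infDist_le_dist_of_mem (mem_image_of_mem _ hx)).trans ?_
      rwa [dist_comm, dist_eq_norm]
    have hlim : Tendsto (fun J : ℕ => 2 * (2⁻¹ : ℝ) ^ J) atTop (𝓝 (2 * 0)) :=
      (tendsto_pow_atTop_nhds_zero_of_lt_one (by norm_num) (by norm_num)).const_mul 2
    rw [mul_zero] at hlim
    exact le_antisymm (ge_of_tendsto' hlim hle) infDist_nonneg
  · rintro ⟨x, hx, hxy⟩
    refine mem_iInter.2 fun J => ⟨x, hx, ?_⟩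
    simp only at hxy ⊢
    rw [hxy, sub_self, norm_zero]
    positivity

theorem sectionEnergy_univ_ne_top [IsProbabilityMeasure ν] {β t : ℝ} (hβ : 0 < β) (hβm : β < m)
    (hR : 1 ≤ R) (hβt : β < t) (hν : IsFrostman ν t) : sectionEnergy β R ν univ ≠ ∞ := by
  obtain ⟨C, hC, h⟩ := lintegral_skewProj_le hβ hβm hR
  obtain ⟨C', hC', h'⟩ := hν.exists_lintegral_edist_le hβ hβt
  have hle : sectionEnergy β R ν univ ≤ C * C' := by
    simp only [sectionEnergy, mem_univ, and_self, ofPred_true, Measure.restrict_univ]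
    rw [lintegral_prod _ (measurable_edist_skewProj β).aemeasurable]
    calc _ ≤ ∫⁻ z : (Fin (m + 1) → ℝ) × (Fin (m + 1) → ℝ), C * edist z.1 z.2 ^ (-β) ∂(ν.prod ν) :=
          lintegral_mono fun z => h _ _
      _ = C * ∫⁻ x, ∫⁻ y, edist x y ^ (-β) ∂ν ∂ν := by
          rw [lintegral_const_mul' _ _ hC, lintegral_prod]
          exact ((measurable_fst.edist measurable_snd).pow_const _).aemeasurable
      _ ≤ C * ∫⁻ _, C' ∂ν := by gcongr; exact h' _
      _ = C * C' := by simp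
  exact ne_top_of_le_ne_top (by finiteness) hle

theorem tendsto_sectionEnergy [IsProbabilityMeasure ν] {β : ℝ}
    (hE : sectionEnergy β R ν univ ≠ ∞)
    {T : ℕ → Set ((Fin (m + 1) → ℝ) × (Fin m → ℝ))} (hT : ∀ J, MeasurableSet (T J))
    (hanti : Antitone T) :
    Tendsto (fun J => sectionEnergy β R ν (T J)) atTop (𝓝 (sectionEnergy β R ν (⋂ J, T J))) := by
  set τ := ((ν.prod ν).prod (volume.restrict (closedBall (0 : Fin m → ℝ) R))).withDensity
    (fun p => edist (skewProj p.2 p.1.1) (skewProj p.2 p.1.2) ^ (-β)) with hτ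
  have heq : ∀ H : Set ((Fin (m + 1) → ℝ) × (Fin m → ℝ)), MeasurableSet H →
      sectionEnergy β R ν H = τ {p | (p.1.1, p.2) ∈ H ∧ (p.1.2, p.2) ∈ H} := fun H hH => by
    rw [hτ, withDensity_apply _ (measurableSet_sectionPair hH), sectionEnergy]
  have hfin : τ univ ≠ ∞ := by
    rw [hτ, withDensity_apply _ .univ]
    simpa [sectionEnergy] using hE
  simp only [heq _ (hT _), heq _ (MeasurableSet.iInter hT)]
  have hset : {p : ((Fin (m + 1) → ℝ) × (Fin (m + 1) → ℝ)) × (Fin m → ℝ) |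
      (p.1.1, p.2) ∈ ⋂ J, T J ∧ (p.1.2, p.2) ∈ ⋂ J, T J} =
      ⋂ J, {p | (p.1.1, p.2) ∈ T J ∧ (p.1.2, p.2) ∈ T J} := by
    ext p
    simp only [mem_iInter]
    exact ⟨fun h J => ⟨h.1 J, h.2 J⟩, fun h => ⟨fun J => (h J).1, fun J => (h J).2⟩⟩
  rw [hset]
  exact tendsto_measure_iInter_atTop (fun J => (measurableSet_sectionPair (hT J)).nullMeasurableSet)
    (fun J J' h p hp => ⟨hanti h hp.1, hanti h hp.2⟩)
    ⟨0, ne_top_of_le_ne_top hfin (measure_mono (subset_univ _))⟩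

theorem sectionEnergy_eq_zero [IsProbabilityMeasure ν] {β : ℝ} (hH : MeasurableSet H)
    (h : ∀ᵐ v ∂(volume.restrict (closedBall (0 : Fin m → ℝ) R)), ν {y | (y, v) ∈ H} = 0) :
    sectionEnergy β R ν H = 0 := by
  refine setLIntegral_measure_zero _ _ (measure_mono_null (t := {p | (p.1.1, p.2) ∈ H})
    (fun p hp => hp.1) ?_)
  have hm : MeasurableSet {p : ((Fin (m + 1) → ℝ) × (Fin (m + 1) → ℝ)) × (Fin m → ℝ) |
      (p.1.1, p.2) ∈ H} := ((measurable_fst.comp measurable_fst).prodMk measurable_snd) hH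
  rw [Measure.prod_apply_symm hm]
  refine (lintegral_congr_ae ?_).trans lintegral_zero
  filter_upwards [h] with v hv
  exact Measure.quasiMeasurePreserving_fst.preimage_null hv

theorem le_dimH_inter_of_energy_ne_top [IsProbabilityMeasure ν] {K' : Set (Fin (m + 1) → ℝ)}
    (hK : IsCompact K) (hK' : IsCompact K') (hν : ν K'ᶜ = 0) {β : ℝ} (hβ : 0 < β) {v : Fin m → ℝ}
    (hE : ∫⁻ z, edist (skewProj v z.1) (skewProj v z.2) ^ (-β) ∂(ν.prod ν) ≠ ∞)
    (h0 : ν {y | skewProj v y ∈ skewProj v '' K} ≠ 0) :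
    ENNReal.ofReal β ≤ dimH (skewProj v '' K ∩ skewProj v '' K') := by
  have hm : Measurable (skewProj v) :=
    (continuous_skewProj.comp (Continuous.prodMk_right v)).measurable
  have hed : Measurable fun z : (Fin m → ℝ) × (Fin m → ℝ) => edist z.1 z.2 ^ (-β) :=
    (measurable_fst.edist measurable_snd).pow_const _
  have hmeas : MeasurableSet (skewProj v '' K ∩ skewProj v '' K') :=
    (isCompact_skewProj_image hK v).measurableSet.inter (isCompact_skewProj_image hK' v).measurableSet
  have hprob : IsProbabilityMeasure (ν.map (skewProj v)) :=
    Measure.isProbabilityMeasure_map hm.aemeasurable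
  refine le_dimH_of_energy_ne_top (μ := ν.map (skewProj v)) hβ ?_ hmeas ?_
  · rw [← lintegral_prod (fun z => edist z.1 z.2 ^ (-β)) hed.aemeasurable,
      Measure.map_prod_map _ _ hm hm, lintegral_map hed (hm.prodMap hm)]
    exact hE
  · rw [Measure.map_apply hm hmeas]
    intro hz
    refine h0 (measure_mono_null (fun y hy => ?_) (measure_union_null hz hν))
    by_cases hyK : y ∈ K'
    · exact Or.inl ⟨hy, mem_image_of_mem _ hyK⟩
    · exact Or.inr hyK

/-- The projections of two compact sets carrying Frostman measures have a large intersection in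
positively many directions. -/
theorem exists_frequently_le_dimH_inter [IsProbabilityMeasure μ] [IsProbabilityMeasure ν]
    {K' : Set (Fin (m + 1) → ℝ)} (hK : IsCompact K) (hK' : IsCompact K') (hμK : μ Kᶜ = 0)
    (hνK : ν K'ᶜ = 0) {s s' t β : ℝ} (hs : m < s) (hs' : s ≤ m + 1) (hss : s < s') (hβ : 0 < β)
    (hβm : β < m) (hβt : β < t) (hsβ : 2 * m < s + β) (hμ : IsFrostman μ s')
    (hν : IsFrostman ν t) :
    ∃ R : ℝ, ∃ᶠ v in ae (volume.restrict (closedBall (0 : Fin m → ℝ) R)),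
      ENNReal.ofReal β ≤ dimH (skewProj v '' K ∩ skewProj v '' K') := by
  have hm0 : (0 : ℝ) ≤ m := Nat.cast_nonneg m
  obtain ⟨a, ha, hpos⟩ := exists_pos_measure_le_abs_sub (μ := μ) (ν := ν) fun c =>
    hμ.measure_eq_zero (by linarith)
      (measurableSet_eq_fun (measurable_pi_apply 0) measurable_const)
      ((dimH_hyperplane_le m c).trans_lt (by
        rw [← ENNReal.ofReal_natCast]
        exact (ENNReal.ofReal_lt_ofReal_iff (by linarith)).2 (by linarith)))
  obtain ⟨S₀, hS₀⟩ := (hK.union hK').isBounded.subset_closedBall (0 : Fin (m + 1) → ℝ)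
  set S : ℝ := max 1 S₀ with hSdef
  have hS : 1 ≤ S := le_max_left _ _
  have hKS : K ∪ K' ⊆ closedBall 0 S := hS₀.trans (closedBall_subset_closedBall (le_max_right _ _))
  have hμS : μ (closedBall 0 S)ᶜ = 0 :=
    measure_mono_null (compl_subset_compl.2 (subset_union_left.trans hKS)) hμK
  have hνS : ν (closedBall 0 S)ᶜ = 0 :=
    measure_mono_null (compl_subset_compl.2 (subset_union_right.trans hKS)) hνK
  set R : ℝ := (2 * S + 2) / a + 1 with hRdef
  have hR : 1 ≤ R := by rw [hRdef, le_add_iff_nonneg_left]; positivity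
  have haR : 2 * S + 2 ≤ (R - 1) * a := by
    rw [hRdef, add_sub_cancel_right, div_mul_cancel₀ _ ha.ne']
  have hE : sectionEnergy β R ν univ ≠ ∞ := sectionEnergy_univ_ne_top hβ hβm hR hβt hν
  set T : ℕ → Set ((Fin (m + 1) → ℝ) × (Fin m → ℝ)) := fun J =>
    {p | ∃ x ∈ K, ‖skewProj p.2 x - skewProj p.2 p.1‖ ≤ 2 * (2⁻¹ : ℝ) ^ J} with hT
  have hTm : ∀ J, MeasurableSet (T J) :=
    fun J => (isClosed_exists_norm_skewProj_sub_le hK _).measurableSet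
  have hTanti : Antitone T := by
    rintro J J' hJ p ⟨x, hx, hxp⟩
    refine ⟨x, hx, hxp.trans ?_⟩
    have := pow_le_pow_of_le_one (by norm_num : (0 : ℝ) ≤ 2⁻¹) (by norm_num) hJ
    linarith
  have hlim := tendsto_sectionEnergy hE hTm hTanti
  have hTfin : ∀ J, sectionEnergy β R ν (T J) ≠ ∞ := fun J =>
    ne_top_of_le_ne_top hE (lintegral_mono_set fun p _ => ⟨mem_univ _, mem_univ _⟩)
  have hEμ : ∫⁻ z, edist z.1 z.2 ^ (-s) ∂(μ.prod μ) ≠ ∞ := by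
    obtain ⟨C, hC, h⟩ := hμ.exists_lintegral_edist_le (by linarith : 0 < s) hss
    rw [lintegral_prod _ ((measurable_fst.edist measurable_snd).pow_const _).aemeasurable]
    refine ne_top_of_le_ne_top hC ((lintegral_mono h).trans ?_)
    simp
  have hfreq : ∃ᶠ v in ae (volume.restrict (closedBall (0 : Fin m → ℝ) R)),
      ν {y | skewProj v y ∈ skewProj v '' K} ≠ 0 := by
    intro hcon
    simp only [not_not] at hcon
    have hzero : sectionEnergy β R ν (⋂ J, T J) = 0 := by
      refine sectionEnergy_eq_zero (MeasurableSet.iInter hTm) ?_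
      rw [hT, iInter_exists_norm_skewProj_sub_le hK]
      exact hcon
    rw [hzero] at hlim
    have hlim' : Tendsto (fun J => (sectionEnergy β R ν (T J)).toReal) atTop (𝓝 0) :=
      (ENNReal.tendsto_toReal (by simp)).comp hlim
    obtain ⟨C, hC, hmain⟩ := exists_pairing_cubeKernel_le (D := (1 + R) * S + 1) hR hs hs' hβ hβm.le
      hsβ hEμ hμS hνS le_rfl
    set c : ℝ := ((2 * S) ^ m)⁻¹ * (μ.prod ν).real {z | a ≤ |(z.1 - z.2) 0|} with hc
    have hc0 : 0 < c := by
      have : 0 < (μ.prod ν).real {z | a ≤ |(z.1 - z.2) 0|} :=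
        ENNReal.toReal_pos hpos (measure_ne_top _ _)
      positivity
    have hle : ∀ η : ℝ, 0 < η → c ≤ C * η := fun η hη => by
      have hl : Tendsto (fun J => C * (η + η⁻¹ * (sectionEnergy β R ν (T J)).toReal)) atTop
          (𝓝 (C * (η + η⁻¹ * 0))) := ((hlim'.const_mul _).const_add _).const_mul _
      rw [mul_zero, add_zero] at hl
      refine ge_of_tendsto' hl fun J => ?_
      have hr : (0 : ℝ) < 2⁻¹ ^ J := by positivity
      have hr1 : (2⁻¹ : ℝ) ^ J ≤ 1 := pow_le_one₀ (by norm_num) (by norm_num)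
      calc c ≤ _ := le_pairing_univ ha hR haR hr hr1 hμS hνS le_rfl
        _ = _ := pairing_univ_eq_of_subset (by linarith) hr hr1 (hTm J) hμK (fun y v h => h) hμS le_rfl
        _ ≤ _ := hmain (T J) (hTm J) (hTfin J) η hη J
    have h1 := hle (c / (2 * (C + 1))) (by positivity)
    have h2 : C * (c / (2 * (C + 1))) < c := by
      rw [← mul_div_assoc, div_lt_iff₀ (by positivity)]
      nlinarith
    linarith
  refine ⟨R, ?_⟩
  have hfin : ∀ᵐ v ∂(volume.restrict (closedBall (0 : Fin m → ℝ) R)),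
      ∫⁻ z, edist (skewProj v z.1) (skewProj v z.2) ^ (-β) ∂(ν.prod ν) < ∞ := by
    refine ae_lt_top (measurable_edist_skewProj β).lintegral_prod_left' ?_
    rw [← lintegral_prod_symm _ (measurable_edist_skewProj β).aemeasurable]
    simpa [sectionEnergy] using hE
  exact (hfreq.and_eventually hfin).mono fun v hv =>
    le_dimH_inter_of_energy_ne_top hK hK' hνK hβ hv.2.ne hv.1

end Intersection

/-! ### From skew projections to orthogonal projections -/

section Orthogonal

open Filter

variable {m : ℕ}

theorem exists_frequently_lt_dimH_inter {A B : Set (Fin (m + 1) → ℝ)}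
    (hA : MeasurableSet A) (hB : MeasurableSet B) (hdB : dimH B ≤ m)
    (hsum : 2 * (m : ℝ≥0∞) < dimH A + dimH B) {γ : ℝ≥0∞} (hγ : γ < dimH B) :
    ∃ R : ℝ, ∃ᶠ v in ae (volume.restrict (closedBall (0 : Fin m → ℝ) R)),
      γ < dimH (skewProj v '' A ∩ skewProj v '' B) := by
  have hdA : dimH A ≤ m + 1 := by
    refine (dimH_mono (subset_univ A)).trans ?_
    rw [Real.dimH_univ_pi_fin]
    push_cast; exact le_rfl
  have hAt : dimH A ≠ ∞ := ne_top_of_le_ne_top (by finiteness) hdA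
  have hBt : dimH B ≠ ∞ := ne_top_of_le_ne_top (by finiteness) hdB
  have hγt : γ ≠ ∞ := hγ.ne_top
  generalize ha : (dimH A).toReal = a
  generalize hb : (dimH B).toReal = b
  generalize hg : γ.toReal = g
  have ha' : dimH A = ENNReal.ofReal a := by rw [← ha, ENNReal.ofReal_toReal hAt]
  have hb' : dimH B = ENNReal.ofReal b := by rw [← hb, ENNReal.ofReal_toReal hBt]
  have hg' : γ = ENNReal.ofReal g := by rw [← hg, ENNReal.ofReal_toReal hγt]
  have h1 : a ≤ m + 1 := by
    simpa [ha] using! ENNReal.toReal_mono (by finiteness) hdA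
  have h2 : b ≤ m := by simpa [hb] using! ENNReal.toReal_mono (by finiteness) hdB
  have h3 : 2 * m < a + b := by
    have := ENNReal.toReal_strict_mono (ENNReal.add_ne_top.2 ⟨hAt, hBt⟩) hsum
    rwa [ENNReal.toReal_add hAt hBt, ha, hb, ENNReal.toReal_mul, ENNReal.toReal_natCast,
      ENNReal.toReal_ofNat] at this
  have h4 : g < b := by
    simpa [hb, hg] using! ENNReal.toReal_strict_mono hBt hγ
  have hg0 : 0 ≤ g := hg ▸ ENNReal.toReal_nonneg
  obtain ⟨s', hs'1, hs'2⟩ := exists_between (show 2 * m - b < a by linarith)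
  obtain ⟨s, hs1, hs2⟩ := exists_between hs'1
  obtain ⟨t, ht1, ht2⟩ := exists_between (show max g (2 * m - s) < b from max_lt h4 (by linarith))
  obtain ⟨β, hβ1, hβ2⟩ := exists_between ht1
  have hβg : g < β := (le_max_left _ _).trans_lt hβ1
  have hβs : 2 * m - s < β := (le_max_right _ _).trans_lt hβ1
  have hm0 : (0 : ℝ) ≤ m := Nat.cast_nonneg m
  obtain ⟨K, hKA, hK, μ, hμ, hμK, hμF⟩ := exists_frostman_measure hA (t := s') (by linarith)
    (by rw [ha']; exact (ENNReal.ofReal_lt_ofReal_iff (by linarith)).2 hs'2)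
  obtain ⟨K', hKB, hK', ν, hν, hνK, hνF⟩ := exists_frostman_measure hB (t := t) (by linarith)
    (by rw [hb']; exact (ENNReal.ofReal_lt_ofReal_iff (by linarith)).2 ht2)
  obtain ⟨R, hR⟩ := exists_frequently_le_dimH_inter hK hK' hμK hνK (by linarith) (by linarith)
    hs2 (by linarith) (by linarith) hβ2 (by linarith) hμF hνF
  refine ⟨R, hR.mono fun v hv => ?_⟩
  calc γ = ENNReal.ofReal g := hg'
    _ < ENNReal.ofReal β := (ENNReal.ofReal_lt_ofReal_iff (by linarith)).2 hβg
    _ ≤ _ := hv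
    _ ≤ _ := dimH_mono (inter_subset_inter (image_mono hKA) (image_mono hKB))

theorem lipschitzWith_skewProj (v : Fin m → ℝ) : LipschitzWith (1 + ‖v‖₊) (skewProj v) :=
  LipschitzWith.of_dist_le_mul fun x y => by
    rw [dist_eq_norm, dist_eq_norm, ← skewProj_sub]
    exact norm_skewProj_le v _

theorem skewProj_sub_smul {v : Fin m → ℝ} {e : Fin (m + 1) → ℝ} (he : Fin.tail e = e 0 • v) (c : ℝ)
    (x : Fin (m + 1) → ℝ) : skewProj v (x - c • e) = skewProj v x := by
  funext i
  have := congrFun he i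
  simp only [Fin.tail, Pi.smul_apply, smul_eq_mul] at this
  simp only [skewProj, Fin.tail, Pi.sub_apply, Pi.smul_apply, smul_eq_mul, this]
  ring

theorem eq_smul_of_skewProj_eq {v : Fin m → ℝ} {e : Fin (m + 1) → ℝ} (he : Fin.tail e = e 0 • v)
    (he0 : e 0 ≠ 0) {x y : Fin (m + 1) → ℝ} (h : skewProj v x = skewProj v y) :
    x = y + ((x 0 - y 0) / e 0) • e := by
  funext i
  refine Fin.cases ?_ (fun i => ?_) i
  · simp only [Pi.add_apply, Pi.smul_apply, smul_eq_mul]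
    field_simp; ring
  · have h1 := congrFun he i
    have h2 := congrFun h i
    simp only [Fin.tail, Pi.smul_apply, smul_eq_mul] at h1
    simp only [skewProj, Fin.tail, Pi.sub_apply, Pi.smul_apply, smul_eq_mul] at h2
    simp only [Pi.add_apply, Pi.smul_apply, smul_eq_mul, h1]
    field_simp
    linarith

theorem sub_inner_smul_eq {E : Type*} [NormedAddCommGroup E] [InnerProductSpace ℝ E] {e : E}
    (he : ‖e‖ = 1) (y : E) (c : ℝ) :
    (y + c • e) - ⟪y + c • e, e⟫ • e = y - ⟪y, e⟫ • e := by
  rw [inner_add_left, real_inner_smul_left, real_inner_self_eq_norm_sq, he]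
  module

theorem dimH_skewProj_inter_le {v : Fin m → ℝ} {e : EuclideanSpace ℝ (Fin (m + 1))} (he1 : ‖e‖ = 1)
    (he : Fin.tail (⇑e) = e 0 • v) (he0 : e 0 ≠ 0) (A B : Set (EuclideanSpace ℝ (Fin (m + 1)))) :
    dimH (skewProj v '' (EuclideanSpace.equiv (Fin (m + 1)) ℝ '' A) ∩
        skewProj v '' (EuclideanSpace.equiv (Fin (m + 1)) ℝ '' B)) ≤
      dimH ((fun x => x - ⟪x, e⟫ • e) '' A ∩ (fun x => x - ⟪x, e⟫ • e) '' B) := by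
  have hlip := (lipschitzWith_skewProj v).comp (EuclideanSpace.equiv (Fin (m + 1)) ℝ).lipschitz
  refine (dimH_mono ?_).trans (hlip.dimH_image_le _)
  rintro _ ⟨⟨_, ⟨a, ha, rfl⟩, rfl⟩, ⟨_, ⟨b, hb, rfl⟩, hab⟩⟩
  refine ⟨a - ⟪a, e⟫ • e, ⟨⟨a, ha, rfl⟩, ⟨b, hb, ?_⟩⟩, ?_⟩
  · have h := eq_smul_of_skewProj_eq he he0 hab
    have h' : b = a + ((b 0 - a 0) / e 0) • e := by
      ext i
      exact congrFun h i
    simp only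
    rw [h']
    exact sub_inner_smul_eq he1 _ _
  · exact skewProj_sub_smul he _ _

theorem lipschitzOnWith_tail_div {c : ℝ} (hc : 0 < c) :
    LipschitzOnWith (2 / c ^ 2).toNNReal
      (fun e : EuclideanSpace ℝ (Fin (m + 1)) => (e 0)⁻¹ • Fin.tail (⇑e))
      {e | ‖e‖ = 1 ∧ c ≤ e 0} := by
  refine LipschitzOnWith.of_dist_le_mul fun e he f hf => ?_
  obtain ⟨he1, hec⟩ := he
  obtain ⟨hf1, hfc⟩ := hf
  have he0 : 0 < e 0 := hc.trans_le hec
  have hf0 : 0 < f 0 := hc.trans_le hfc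
  rw [Real.coe_toNNReal _ (by positivity)]
  refine (dist_pi_le_iff (by positivity)).2 fun i => ?_
  simp only [Pi.smul_apply, Fin.tail, smul_eq_mul]
  have h1 : ∀ j, |e j - f j| ≤ dist e f := fun j => by
    rw [dist_eq_norm]
    exact PiLp.norm_apply_le (e - f) j
  have h2 : ∀ j, |f j| ≤ 1 := fun j => hf1 ▸ PiLp.norm_apply_le f j
  have h3 : (e 0)⁻¹ * e i.succ - (f 0)⁻¹ * f i.succ =
      ((e i.succ - f i.succ) * f 0 - f i.succ * (e 0 - f 0)) / (e 0 * f 0) := by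
    field_simp; ring
  have h4 : c ^ 2 ≤ e 0 * f 0 := by rw [sq]; gcongr
  have h5 : |(e i.succ - f i.succ) * f 0 - f i.succ * (e 0 - f 0)| ≤ 2 * dist e f := by
    refine (abs_sub _ _).trans ?_
    rw [abs_mul, abs_mul]
    have h6 : |e i.succ - f i.succ| * |f 0| ≤ dist e f * 1 := by
      gcongr; exacts [h1 _, h2 _]
    have h7 : |f i.succ| * |e 0 - f 0| ≤ 1 * dist e f := by
      gcongr; exacts [h2 _, h1 _]
    linarith
  rw [Real.dist_eq, h3, abs_div, abs_of_pos (mul_pos he0 hf0), div_mul_eq_mul_div]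
  gcongr

/-- Every bounded set of slopes is realized by unit vectors away from the equator. -/
theorem exists_closedBall_subset_image (R : ℝ) :
    ∃ c : ℝ, 0 < c ∧ ∀ v ∈ closedBall (0 : Fin m → ℝ) R, ∃ e : EuclideanSpace ℝ (Fin (m + 1)),
      ‖e‖ = 1 ∧ c ≤ e 0 ∧ (e 0)⁻¹ • Fin.tail (⇑e) = v := by
  set w : (Fin m → ℝ) → EuclideanSpace ℝ (Fin (m + 1)) := fun v => WithLp.toLp 2 (Fin.cons 1 v) with hw
  have hwc : Continuous w := by
    refine (PiLp.continuous_toLp 2 _).comp ?_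
    exact continuous_const.finCons continuous_id
  obtain ⟨N, hN⟩ := ((isCompact_closedBall (0 : Fin m → ℝ) R).image hwc).isBounded.exists_norm_le
  have hw0 : ∀ v, w v 0 = 1 := fun v => rfl
  have hwpos : ∀ v, 0 < ‖w v‖ := fun v => norm_pos_iff.2 fun h => by
    have := hw0 v
    rw [h] at this
    simp at this
  refine ⟨(max 1 N)⁻¹, by positivity, fun v hv => ⟨‖w v‖⁻¹ • w v, ?_, ?_, ?_⟩⟩
  · rw [norm_smul, norm_inv, norm_norm, inv_mul_cancel₀ (hwpos v).ne']
  · rw [PiLp.smul_apply, hw0, smul_eq_mul, mul_one]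
    exact inv_anti₀ (hwpos v) ((hN _ (mem_image_of_mem _ hv)).trans (le_max_right _ _))
  · funext i
    have : w v i.succ = v i := rfl
    simp only [PiLp.smul_apply, hw0, Pi.smul_apply, Fin.tail, smul_eq_mul, this]
    have := (hwpos v).ne'
    field_simp

theorem hausdorffMeasure_directions_pos {P : EuclideanSpace ℝ (Fin (m + 1)) → Prop}
    {Q : (Fin m → ℝ) → Prop} {R : ℝ}
    (hQ : ∃ᶠ v in ae (volume.restrict (closedBall (0 : Fin m → ℝ) R)), Q v)
    (hQP : ∀ (v : Fin m → ℝ) (e : EuclideanSpace ℝ (Fin (m + 1))), ‖e‖ = 1 → e 0 ≠ 0 → Fin.tail (⇑e) = e 0 • v → Q v → P e) :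
    0 < μH[(m : ℝ)] {e : EuclideanSpace ℝ (Fin (m + 1)) | ‖e‖ = 1 ∧ P e} := by
  obtain ⟨c, hc, hball⟩ := exists_closedBall_subset_image (m := m) R
  rw [pos_iff_ne_zero]
  intro hzero
  have hlip := (lipschitzOnWith_tail_div (m := m) hc).mono
    (inter_subset_left (t := {e | ‖e‖ = 1 ∧ P e}))
  have h1 := hlip.hausdorffMeasure_image_le (Nat.cast_nonneg m)
  rw [measure_mono_null inter_subset_right hzero, mul_zero, nonpos_iff_eq_zero] at h1
  have hvol : (μH[(m : ℝ)] : Measure (Fin m → ℝ)) = volume := by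
    simpa using hausdorffMeasure_pi_real (ι := Fin m)
  rw [hvol] at h1
  refine hQ ?_
  have h2 := measure_eq_zero_iff_ae_notMem.1 h1
  filter_upwards [ae_restrict_of_ae h2, ae_restrict_mem isClosed_closedBall.measurableSet] with
    v hv hvR hvQ
  obtain ⟨e, he1, hec, hev⟩ := hball v hvR
  have he0 : e 0 ≠ 0 := (hc.trans_le hec).ne'
  refine hv ⟨e, ⟨⟨he1, hec⟩, he1, hQP v e he1 he0 ?_ hvQ⟩, hev⟩
  rw [← hev, smul_inv_smul₀ he0]

end Orthogonal

theorem stmt_4 (n : ℕ) (hn : 2 ≤ n) (A B : Set (EuclideanSpace ℝ (Fin n)))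
    (hA : MeasurableSet A) (hB : MeasurableSet B)
    (hdA : (n : ℝ≥0∞) - 1 < dimH A) (hdB : dimH B ≤ (n : ℝ≥0∞) - 1)
    (hsum : 2 * ((n : ℝ≥0∞) - 1) < dimH A + dimH B) (ε : ℝ) (hε : 0 < ε) :
    0 < μH[(n : ℝ) - 1] {e : EuclideanSpace ℝ (Fin n) | ‖e‖ = 1 ∧
        dimH B - ENNReal.ofReal ε <
          dimH ((fun x => x - ⟪x, e⟫ • e) '' A ∩ (fun x => x - ⟪x, e⟫ • e) '' B)} := by
  obtain ⟨m, rfl⟩ : ∃ m, n = m + 1 := ⟨n - 1, by omega⟩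
  have hcast : ((m + 1 : ℕ) : ℝ≥0∞) - 1 = m := by
    push_cast
    exact ENNReal.add_sub_cancel_right ENNReal.one_ne_top
  rw [hcast] at hdA hdB hsum
  set φ := EuclideanSpace.equiv (Fin (m + 1)) ℝ with hφ
  have hAφ : dimH (φ '' A) = dimH A := φ.dimH_image A
  have hBφ : dimH (φ '' B) = dimH B := φ.dimH_image B
  have hBt : dimH B ≠ ∞ := ne_top_of_le_ne_top (by finiteness) hdB
  have hB0 : dimH B ≠ 0 := by
    intro h0
    rw [h0, add_zero, ← hAφ] at hsum
    have h1 := hsum.trans_le (dimH_mono (subset_univ (φ '' A)))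
    rw [Real.dimH_univ_pi_fin] at h1
    have h2 : 2 * m < m + 1 := by exact_mod_cast h1
    omega
  have hγ : dimH B - ENNReal.ofReal ε < dimH (φ '' B) := by
    rw [hBφ]
    exact ENNReal.sub_lt_self hBt hB0 (by simpa using hε)
  have hmeas : ∀ T : Set (EuclideanSpace ℝ (Fin (m + 1))), MeasurableSet T → MeasurableSet (φ '' T) :=
    fun T hT => φ.toHomeomorph.toMeasurableEquiv.measurableSet_image.2 hT
  obtain ⟨R, hR⟩ := exists_frequently_lt_dimH_inter (hmeas A hA) (hmeas B hB) (by rwa [hBφ])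
    (by rwa [hAφ, hBφ]) hγ
  have hexp : ((m + 1 : ℕ) : ℝ) - 1 = m := by push_cast; ring
  rw [hexp]
  exact hausdorffMeasure_directions_pos hR fun v e he1 he0 he hlt =>
    hlt.trans_le (dimH_skewProj_inter_le he1 he he0 A B)
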